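/- There exist universal constants C_b > 0 (used in the penalty of VI-LCB-Game) and c₄ > 0 such that the following holds for γ ∈ [1/2,1) and δ ∈ (0,1). With probability at least 1−δ over the dataset, the value function V_pe^− produced by VI-LCB-Game satisfies Var_{P̂(·|s,a,b)}(V_pe^−) ≤ 2·Var_{P(·|s,a,b)}(V_pe^−) + c₄·log(N/((1−γ)δ)) / ((1−γ)²·N·d_b(s,a,b)) simultaneously for all (s,a,b) ∈ 𝒮×𝒜×ℬ with d_b(s,a,b) > 0. -/

import Mathlib

open scoped BigOperators ENNReal Classical

noncomputable section

namespace ZSMG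

variable {𝒮 𝒜 ℬ : Type} [Fintype 𝒮] [Fintype 𝒜] [Fintype ℬ]
  [DecidableEq 𝒮] [DecidableEq 𝒜] [DecidableEq ℬ]

/-- Expectation of `V : 𝒮 → ℝ` under the (sub)probability vector `p`. -/
def Pexp (p V : 𝒮 → ℝ) : ℝ := ∑ s', p s' * V s'

/-- Variance of `V` under `p`: `Var_p(V) = p(V∘V) − (pV)²`. -/
def varP (p V : 𝒮 → ℝ) : ℝ := Pexp p (fun s => V s * V s) - (Pexp p V) ^ 2

/-- Payoff of mixed strategies `w, z` in the matrix game `M`. -/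
def pay (M : 𝒜 → ℬ → ℝ) (w : 𝒜 → ℝ) (z : ℬ → ℝ) : ℝ :=
  ∑ a, ∑ b, w a * z b * M a b

/-- Value function associated with a Q-function: minimax value at each state. -/
def valQ (Q : 𝒮 → 𝒜 → ℬ → ℝ) (s : 𝒮) : ℝ :=
  ⨆ w : stdSimplex ℝ 𝒜, ⨅ z : stdSimplex ℝ ℬ, pay (Q s) w.1 z.1

/-- Sup norm over states. -/
def supNormS (f : 𝒮 → ℝ) : ℝ := ⨆ s, |f s|

/-- Sup norm over state-action triples. -/
def supNormQ (f : 𝒮 → 𝒜 → ℬ → ℝ) : ℝ := ⨆ s, ⨆ a, ⨆ b, |f s a b|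

/-- The Bernstein-style penalty `β(s,a,b;V)`; `n` is the count `N(s,a,b)` and
`p` is the row `P̂(·|s,a,b)` of the empirical kernel. -/
def penalty (γ δ Cb : ℝ) (N n : ℕ) (p V : 𝒮 → ℝ) : ℝ :=
  (if n = 0 then 1 / (1 - γ)
   else
     min
       (max (Real.sqrt (Cb * Real.log ((N : ℝ) / ((1 - γ) * δ)) * varP p V / (n : ℝ)))
         (2 * Cb * Real.log ((N : ℝ) / ((1 - γ) * δ)) / ((1 - γ) * (n : ℝ))))
       (1 / (1 - γ))) + 4 / (N : ℝ)

/-- The pessimistic Bellman operator for the max-player. -/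
def TpeMinus (γ δ Cb : ℝ) (N : ℕ) (n : 𝒮 → 𝒜 → ℬ → ℕ)
    (Ph : 𝒮 → 𝒜 → ℬ → 𝒮 → ℝ) (rh : 𝒮 → 𝒜 → ℬ → ℝ)
    (Q : 𝒮 → 𝒜 → ℬ → ℝ) : 𝒮 → 𝒜 → ℬ → ℝ := fun s a b =>
  max (rh s a b + γ * Pexp (Ph s a b) (valQ Q)
        - penalty γ δ Cb N (n s a b) (Ph s a b) (valQ Q)) 0

/-- The pessimistic Bellman operator for the min-player. -/
def TpePlus (γ δ Cb : ℝ) (N : ℕ) (n : 𝒮 → 𝒜 → ℬ → ℕ)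
    (Ph : 𝒮 → 𝒜 → ℬ → 𝒮 → ℝ) (rh : 𝒮 → 𝒜 → ℬ → ℝ)
    (Q : 𝒮 → 𝒜 → ℬ → ℝ) : 𝒮 → 𝒜 → ℬ → ℝ := fun s a b =>
  min (rh s a b + γ * Pexp (Ph s a b) (valQ Q)
        + penalty γ δ Cb N (n s a b) (Ph s a b) (valQ Q)) (1 / (1 - γ))

/-- Count `N(s,a,b)` of occurrences of `(s,a,b)` in the dataset `D`. -/
def cnt {N : ℕ} (D : Fin N → 𝒮 × 𝒜 × ℬ × 𝒮) (s : 𝒮) (a : 𝒜) (b : ℬ) : ℕ :=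
  (Finset.univ.filter fun i => (D i).1 = s ∧ (D i).2.1 = a ∧ (D i).2.2.1 = b).card

/-- Count of full transitions `(s,a,b,s')` in the dataset `D`. -/
def cntT {N : ℕ} (D : Fin N → 𝒮 × 𝒜 × ℬ × 𝒮) (s : 𝒮) (a : 𝒜) (b : ℬ) (s' : 𝒮) : ℕ :=
  (Finset.univ.filter fun i => D i = (s, a, b, s')).card

/-- Empirical transition kernel `P̂(·|s,a,b)` built from the dataset. -/
def Phat {N : ℕ} (D : Fin N → 𝒮 × 𝒜 × ℬ × 𝒮) (s : 𝒮) (a : 𝒜) (b : ℬ) : 𝒮 → ℝ := fun s' =>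
  if cnt D s a b = 0 then ((Fintype.card 𝒮 : ℝ))⁻¹
  else (cntT D s a b s' : ℝ) / (cnt D s a b : ℝ)

/-- Empirical reward `r̂` built from the dataset. -/
def rhat {N : ℕ} (r : 𝒮 → 𝒜 → ℬ → ℝ) (D : Fin N → 𝒮 × 𝒜 × ℬ × 𝒮)
    (s : 𝒮) (a : 𝒜) (b : ℬ) : ℝ :=
  if cnt D s a b = 0 then 0 else r s a b

/-- Number of iterations `T = ⌈log(N/(1−γ))/log(1/γ)⌉` of VI-LCB-Game. -/
def Titer (γ : ℝ) (N : ℕ) : ℕ := ⌈Real.log ((N : ℝ) / (1 - γ)) / Real.log (1 / γ)⌉₊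

/-- `Q_pe^− = Q⁻_T` produced by VI-LCB-Game on the dataset `D`. -/
def QpeMinus (γ δ Cb : ℝ) (r : 𝒮 → 𝒜 → ℬ → ℝ) {N : ℕ}
    (D : Fin N → 𝒮 × 𝒜 × ℬ × 𝒮) : 𝒮 → 𝒜 → ℬ → ℝ :=
  (TpeMinus γ δ Cb N (cnt D) (Phat D) (rhat r D))^[Titer γ N] (fun _ _ _ => 0)

/-- `Q_pe^+ = Q⁺_T` produced by VI-LCB-Game on the dataset `D`. -/
def QpePlus (γ δ Cb : ℝ) (r : 𝒮 → 𝒜 → ℬ → ℝ) {N : ℕ}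
    (D : Fin N → 𝒮 × 𝒜 × ℬ × 𝒮) : 𝒮 → 𝒜 → ℬ → ℝ :=
  (TpePlus γ δ Cb N (cnt D) (Phat D) (rhat r D))^[Titer γ N] (fun _ _ _ => 1 / (1 - γ))

/-- `(w,z)` is a (mixed) Nash equilibrium / saddle point of the matrix game `M`. -/
def IsMatrixNash (M : 𝒜 → ℬ → ℝ) (w : 𝒜 → ℝ) (z : ℬ → ℝ) : Prop :=
  w ∈ stdSimplex ℝ 𝒜 ∧ z ∈ stdSimplex ℝ ℬ ∧
    (∀ w' ∈ stdSimplex ℝ 𝒜, pay M w' z ≤ pay M w z) ∧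
    (∀ z' ∈ stdSimplex ℝ ℬ, pay M w z ≤ pay M w z')

/-- `μ` is a possible max-player output of the algorithm, given the final Q-estimate `Q`. -/
def IsOutputMax (Q : 𝒮 → 𝒜 → ℬ → ℝ) (μ : 𝒮 → 𝒜 → ℝ) : Prop :=
  ∀ s, ∃ z, IsMatrixNash (Q s) (μ s) z

/-- `ν` is a possible min-player output of the algorithm, given the final Q-estimate `Q`. -/
def IsOutputMin (Q : 𝒮 → 𝒜 → ℬ → ℝ) (ν : 𝒮 → ℬ → ℝ) : Prop :=
  ∀ s, ∃ w, IsMatrixNash (Q s) w (ν s)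

/-- `μ` is a stationary (Markov) policy. -/
def IsPolicy (μ : 𝒮 → 𝒜 → ℝ) : Prop := ∀ s, μ s ∈ stdSimplex ℝ 𝒜

/-- `P` is a probability transition kernel. -/
def IsKernel (P : 𝒮 → 𝒜 → ℬ → 𝒮 → ℝ) : Prop := ∀ s a b, P s a b ∈ stdSimplex ℝ 𝒮

/-- `r` is a reward function with values in `[0,1]`. -/
def IsReward (r : 𝒮 → 𝒜 → ℬ → ℝ) : Prop := ∀ s a b, r s a b ∈ Set.Icc (0 : ℝ) 1

/-- `d` is a probability distribution over `𝒮 × 𝒜 × ℬ`. -/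
def IsDist3 (d : 𝒮 → 𝒜 → ℬ → ℝ) : Prop :=
  (∀ s a b, 0 ≤ d s a b) ∧ (∑ s, ∑ a, ∑ b, d s a b) = 1

/-- Transition matrix `P^{μ,ν}` of the product policy `μ × ν`. -/
def Pmat (P : 𝒮 → 𝒜 → ℬ → 𝒮 → ℝ) (μ : 𝒮 → 𝒜 → ℝ) (ν : 𝒮 → ℬ → ℝ) :
    Matrix 𝒮 𝒮 ℝ :=
  Matrix.of fun s s' => ∑ a, ∑ b, μ s a * ν s b * P s a b s'

/-- Reward vector `r^{μ,ν}` of the product policy `μ × ν`. -/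
def rPol (r : 𝒮 → 𝒜 → ℬ → ℝ) (μ : 𝒮 → 𝒜 → ℝ) (ν : 𝒮 → ℬ → ℝ) : 𝒮 → ℝ :=
  fun s => ∑ a, ∑ b, μ s a * ν s b * r s a b

/-- Value function `V^{μ,ν} = (I − γP^{μ,ν})⁻¹ r^{μ,ν}`. -/
def Vpol (γ : ℝ) (P : 𝒮 → 𝒜 → ℬ → 𝒮 → ℝ) (r : 𝒮 → 𝒜 → ℬ → ℝ)
    (μ : 𝒮 → 𝒜 → ℝ) (ν : 𝒮 → ℬ → ℝ) : 𝒮 → ℝ :=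
  Matrix.mulVec ((1 : Matrix 𝒮 𝒮 ℝ) - γ • Pmat P μ ν)⁻¹ (rPol r μ ν)

/-- `V^{μ,⋆}(s) = min_ν V^{μ,ν}(s)`. -/
def VmuStar (γ : ℝ) (P : 𝒮 → 𝒜 → ℬ → 𝒮 → ℝ) (r : 𝒮 → 𝒜 → ℬ → ℝ)
    (μ : 𝒮 → 𝒜 → ℝ) : 𝒮 → ℝ := fun s =>
  ⨅ ν : {ν : 𝒮 → ℬ → ℝ // IsPolicy ν}, Vpol γ P r μ ν.1 s

/-- `V^{⋆,ν}(s) = max_μ V^{μ,ν}(s)`. -/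
def VstarNu (γ : ℝ) (P : 𝒮 → 𝒜 → ℬ → 𝒮 → ℝ) (r : 𝒮 → 𝒜 → ℬ → ℝ)
    (ν : 𝒮 → ℬ → ℝ) : 𝒮 → ℝ := fun s =>
  ⨆ μ : {μ : 𝒮 → 𝒜 → ℝ // IsPolicy μ}, Vpol γ P r μ.1 ν s

/-- `Q^{μ,ν}(s,a,b) = r(s,a,b) + γ P(·|s,a,b) V^{μ,ν}`. -/
def Qpol (γ : ℝ) (P : 𝒮 → 𝒜 → ℬ → 𝒮 → ℝ) (r : 𝒮 → 𝒜 → ℬ → ℝ)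
    (μ : 𝒮 → 𝒜 → ℝ) (ν : 𝒮 → ℬ → ℝ) : 𝒮 → 𝒜 → ℬ → ℝ := fun s a b =>
  r s a b + γ * Pexp (P s a b) (Vpol γ P r μ ν)

/-- `Q^{μ,⋆}(s,a,b) = min_ν Q^{μ,ν}(s,a,b)`. -/
def QmuStar (γ : ℝ) (P : 𝒮 → 𝒜 → ℬ → 𝒮 → ℝ) (r : 𝒮 → 𝒜 → ℬ → ℝ)
    (μ : 𝒮 → 𝒜 → ℝ) : 𝒮 → 𝒜 → ℬ → ℝ := fun s a b =>
  ⨅ ν : {ν : 𝒮 → ℬ → ℝ // IsPolicy ν}, Qpol γ P r μ ν.1 s a b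

/-- `Q^{⋆,ν}(s,a,b) = max_μ Q^{μ,ν}(s,a,b)`. -/
def QstarNu (γ : ℝ) (P : 𝒮 → 𝒜 → ℬ → 𝒮 → ℝ) (r : 𝒮 → 𝒜 → ℬ → ℝ)
    (ν : 𝒮 → ℬ → ℝ) : 𝒮 → 𝒜 → ℬ → ℝ := fun s a b =>
  ⨆ μ : {μ : 𝒮 → 𝒜 → ℝ // IsPolicy μ}, Qpol γ P r μ.1 ν s a b

/-- `(μs, νs)` is a Nash equilibrium of the Markov game. -/
def IsNashPair (γ : ℝ) (P : 𝒮 → 𝒜 → ℬ → 𝒮 → ℝ) (r : 𝒮 → 𝒜 → ℬ → ℝ)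
    (μs : 𝒮 → 𝒜 → ℝ) (νs : 𝒮 → ℬ → ℝ) : Prop :=
  IsPolicy μs ∧ IsPolicy νs ∧
    (∀ μ, IsPolicy μ → ∀ s, Vpol γ P r μ νs s ≤ Vpol γ P r μs νs s) ∧
    (∀ ν, IsPolicy ν → ∀ s, Vpol γ P r μs νs s ≤ Vpol γ P r μs ν s)

/-- `V(ρ) = Σ_s ρ(s) V(s)`. -/
def wAvg (ρ V : 𝒮 → ℝ) : ℝ := ∑ s, ρ s * V s

/-- Discounted occupancy measure `d^{μ,ν}(s;ρ) = (1−γ) ρᵀ(I−γP^{μ,ν})⁻¹`. -/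
def dOcc (γ : ℝ) (P : 𝒮 → 𝒜 → ℬ → 𝒮 → ℝ) (μ : 𝒮 → 𝒜 → ℝ) (ν : 𝒮 → ℬ → ℝ)
    (ρ : 𝒮 → ℝ) : 𝒮 → ℝ := fun s =>
  (1 - γ) * Matrix.vecMul ρ ((1 : Matrix 𝒮 𝒮 ℝ) - γ • Pmat P μ ν)⁻¹ s

/-- `d^{μ,ν}(s,a,b;ρ) = d^{μ,ν}(s;ρ) μ(a|s) ν(b|s)`. -/
def dOcc3 (γ : ℝ) (P : 𝒮 → 𝒜 → ℬ → 𝒮 → ℝ) (μ : 𝒮 → 𝒜 → ℝ) (ν : 𝒮 → ℬ → ℝ)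
    (ρ : 𝒮 → ℝ) : 𝒮 → 𝒜 → ℬ → ℝ := fun s a b =>
  dOcc γ P μ ν ρ s * μ s a * ν s b

/-- Clipped unilateral concentrability coefficient `C⋆_clipped` (in `ℝ≥0∞`;
note that in `ℝ≥0∞` one has `x/0 = ∞` for `x ≠ 0` and `0/0 = 0`, matching the
convention of the paper). -/
def clipCoeff (γ : ℝ) (P : 𝒮 → 𝒜 → ℬ → 𝒮 → ℝ) (ρ : 𝒮 → ℝ) (d : 𝒮 → 𝒜 → ℬ → ℝ)
    (μs : 𝒮 → 𝒜 → ℝ) (νs : 𝒮 → ℬ → ℝ) : ℝ≥0∞ :=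
  max
    (⨆ (μ : {μ : 𝒮 → 𝒜 → ℝ // IsPolicy μ}) (s : 𝒮) (a : 𝒜) (b : ℬ),
      ENNReal.ofReal
          (min (dOcc3 γ P μ.1 νs ρ s a b)
            ((Fintype.card 𝒮 * (Fintype.card 𝒜 + Fintype.card ℬ) : ℝ))⁻¹) /
        ENNReal.ofReal (d s a b))
    (⨆ (ν : {ν : 𝒮 → ℬ → ℝ // IsPolicy ν}) (s : 𝒮) (a : 𝒜) (b : ℬ),
      ENNReal.ofReal
          (min (dOcc3 γ P μs ν.1 ρ s a b)
            ((Fintype.card 𝒮 * (Fintype.card 𝒜 + Fintype.card ℬ) : ℝ))⁻¹) /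
        ENNReal.ofReal (d s a b))

/-- Probability weight of an individual dataset under `(d_b, P)`. -/
def dsWeight {N : ℕ} (d : 𝒮 → 𝒜 → ℬ → ℝ) (P : 𝒮 → 𝒜 → ℬ → 𝒮 → ℝ)
    (D : Fin N → 𝒮 × 𝒜 × ℬ × 𝒮) : ℝ :=
  ∏ i, d (D i).1 (D i).2.1 (D i).2.2.1 * P (D i).1 (D i).2.1 (D i).2.2.1 (D i).2.2.2

/-- Probability of an event over the offline dataset. -/
def dsProb {N : ℕ} (d : 𝒮 → 𝒜 → ℬ → ℝ) (P : 𝒮 → 𝒜 → ℬ → 𝒮 → ℝ)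
    (E : Set (Fin N → 𝒮 × 𝒜 × ℬ × 𝒮)) : ℝ :=
  ∑ D : Fin N → 𝒮 × 𝒜 × ℬ × 𝒮, E.indicator (dsWeight d P) D

/-- Expectation of a function of the offline dataset. -/
def dsExp {N : ℕ} (d : 𝒮 → 𝒜 → ℬ → ℝ) (P : 𝒮 → 𝒜 → ℬ → 𝒮 → ℝ)
    (g : (Fin N → 𝒮 × 𝒜 × ℬ × 𝒮) → ℝ) : ℝ :=
  ∑ D : Fin N → 𝒮 × 𝒜 × ℬ × 𝒮, dsWeight d P D * g D

/-- Dirac (deterministic) policy for the min-player. -/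
def diracB (f : 𝒮 → ℬ) : 𝒮 → ℬ → ℝ := fun s b => if b = f s then 1 else 0

/-- Binomial pmf. -/
def binomPMF (n : ℕ) (p : ℝ) (k : ℕ) : ℝ :=
  (n.choose k : ℝ) * p ^ k * (1 - p) ^ (n - k)

/-- Probability of a set of outcomes under a `Binomial(n,p)` distribution. -/
def binomProb (n : ℕ) (p : ℝ) (E : Set ℕ) : ℝ :=
  ∑ k ∈ Finset.range (n + 1), E.indicator (binomPMF n p) k

/-- Weight of an i.i.d. sample from a distribution on a finite set. -/
def iidWeight {𝒳 : Type} {N : ℕ} (d : 𝒳 → ℝ) (ω : Fin N → 𝒳) : ℝ := ∏ i, d (ω i)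

/-- Probability of an event for `N` i.i.d. draws from `d`. -/
def iidProb {𝒳 : Type} [Fintype 𝒳] {N : ℕ} (d : 𝒳 → ℝ) (E : Set (Fin N → 𝒳)) : ℝ :=
  ∑ ω : Fin N → 𝒳, E.indicator (iidWeight d) ω

/-- Number of occurrences of `x` in the sample `ω`. -/
def iidCount {𝒳 : Type} [DecidableEq 𝒳] {N : ℕ} (ω : Fin N → 𝒳) (x : 𝒳) : ℕ :=
  (Finset.univ.filter fun i => ω i = x).card

/-- Transition kernel of the hard instance `ℳ𝒢_θ`. -/
def hardP {S A B : ℕ} (θ : Fin A → ℝ) : Fin S → Fin A → Fin B → Fin S → ℝ :=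
  fun s a b s' =>
    if s.val = 0 ∧ b.val = 0 then
      θ a * (if s'.val = 0 then 1 else 0) + (1 - θ a) * (if s'.val = 1 then 1 else 0)
    else if s' = s then 1 else 0

/-- Reward of the hard instance: `r(s,a,b) = 1{s = 0}`. -/
def hardR {S A B : ℕ} : Fin S → Fin A → Fin B → ℝ := fun s _ _ => if s.val = 0 then 1 else 0

end ZSMG

namespace ZSMG

variable {𝒮 𝒜 ℬ : Type} [Fintype 𝒮] [Fintype 𝒜] [Fintype ℬ]

section Variance

variable {p V W : 𝒮 → ℝ}

lemma Pexp_mono (hp : p ∈ stdSimplex ℝ 𝒮) (h : ∀ s, V s ≤ W s) : Pexp p V ≤ Pexp p W :=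
  Finset.sum_le_sum fun s _ => mul_le_mul_of_nonneg_left (h s) (hp.1 s)

lemma Pexp_const (hp : p ∈ stdSimplex ℝ 𝒮) (c : ℝ) : Pexp p (fun _ => c) = c := by
  simp [Pexp, ← Finset.sum_mul, hp.2]

lemma Pexp_add (p V W : 𝒮 → ℝ) : Pexp p (fun s => V s + W s) = Pexp p V + Pexp p W := by
  simp [Pexp, mul_add, Finset.sum_add_distrib]

lemma Pexp_const_mul (p V : 𝒮 → ℝ) (c : ℝ) : Pexp p (fun s => c * V s) = c * Pexp p V := by
  simp only [Pexp, Finset.mul_sum]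
  exact Finset.sum_congr rfl fun s _ => by ring

lemma Pexp_sub (p V W : 𝒮 → ℝ) : Pexp p (fun s => V s - W s) = Pexp p V - Pexp p W := by
  simp [Pexp, mul_sub, Finset.sum_sub_distrib]

lemma Pexp_sq_sub (hp : p ∈ stdSimplex ℝ 𝒮) (c : ℝ) :
    Pexp p (fun s => (V s - c) ^ 2) = varP p V + (Pexp p V - c) ^ 2 := by
  have h : (fun s => (V s - c) ^ 2) = fun s => (V s * V s + (-2 * c) * V s) + c ^ 2 := by
    funext s; ring
  rw [h, Pexp_add p (fun s => V s * V s + (-2 * c) * V s) (fun _ => c ^ 2),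
    Pexp_add p (fun s => V s * V s) (fun s => (-2 * c) * V s), Pexp_const hp, Pexp_const_mul]
  unfold varP
  ring

lemma varP_le_Pexp_sq_sub (hp : p ∈ stdSimplex ℝ 𝒮) (c : ℝ) :
    varP p V ≤ Pexp p (fun s => (V s - c) ^ 2) := by
  rw [Pexp_sq_sub hp]
  nlinarith [sq_nonneg (Pexp p V - c)]

lemma varP_eq_Pexp_sq_sub (hp : p ∈ stdSimplex ℝ 𝒮) :
    varP p V = Pexp p (fun s => (V s - Pexp p V) ^ 2) := by
  rw [Pexp_sq_sub hp]
  ring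

lemma varP_nonneg (hp : p ∈ stdSimplex ℝ 𝒮) : 0 ≤ varP p V := by
  rw [varP_eq_Pexp_sq_sub hp]
  exact Finset.sum_nonneg fun s _ => mul_nonneg (hp.1 s) (sq_nonneg _)

lemma varP_le_sq (hp : p ∈ stdSimplex ℝ 𝒮) {H : ℝ} (h0 : ∀ s, 0 ≤ V s) (hH : ∀ s, V s ≤ H) :
    varP p V ≤ H ^ 2 := by
  refine (varP_le_Pexp_sq_sub hp 0).trans ?_
  rw [← Pexp_const hp (H ^ 2)]
  exact Pexp_mono hp fun s => by simpa using pow_le_pow_left₀ (h0 s) (hH s) 2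

lemma varP_le_of_abs_sub_le (hp : p ∈ stdSimplex ℝ 𝒮) {ε : ℝ} (h : ∀ s, |V s - W s| ≤ ε) :
    varP p V ≤ 5 / 4 * varP p W + 5 * ε ^ 2 := by
  refine (varP_le_Pexp_sq_sub hp (Pexp p W)).trans ?_
  rw [varP_eq_Pexp_sq_sub (V := W) hp, ← Pexp_const_mul]
  conv_rhs => rw [← Pexp_const hp (5 * ε ^ 2), ← Pexp_add]
  refine Pexp_mono hp fun s => ?_
  have h1 : (V s - W s) ^ 2 ≤ ε ^ 2 := sq_le_sq' (by linarith [(abs_le.1 (h s)).1])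
    (abs_le.1 (h s)).2
  nlinarith [sq_nonneg ((W s - Pexp p W) / 2 - 2 * (V s - W s))]

lemma varP_add_const (hp : p ∈ stdSimplex ℝ 𝒮) (c : ℝ) :
    varP p (fun s => V s + c) = varP p V := by
  have h : Pexp p (fun s => V s + c) = Pexp p V + c := by
    rw [Pexp_add p V (fun _ => c), Pexp_const hp]
  rw [varP_eq_Pexp_sq_sub hp, varP_eq_Pexp_sq_sub hp, h]
  simp

lemma varP_sub_varP_le (hp : p ∈ stdSimplex ℝ 𝒮) {H : ℝ} (hVW : ∀ s, V s ≤ W s)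
    (hV : ∀ s t, V s - V t ≤ H) (hW : ∀ s t, W s - W t ≤ H) :
    varP p W - varP p V ≤ 2 * H * (Pexp p W - Pexp p V) := by
  have key : ∀ s, V s + W s - (Pexp p V + Pexp p W) ≤ 2 * H := by
    intro s
    have h1 : V s + W s - 2 * H ≤ Pexp p V + Pexp p W := by
      rw [← Pexp_const hp (V s + W s - 2 * H), ← Pexp_add]
      exact Pexp_mono hp fun t => by linarith [hV s t, hW s t]
    linarith
  have e : varP p W - varP p V
      = Pexp p (fun s => (W s - V s) * (V s + W s - (Pexp p V + Pexp p W))) := by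
    have h : (fun s => (W s - V s) * (V s + W s - (Pexp p V + Pexp p W)))
        = fun s => (W s * W s - V s * V s) - (Pexp p V + Pexp p W) * (W s - V s) := by
      funext s; ring
    rw [h, Pexp_sub p (fun s => W s * W s - V s * V s), Pexp_sub p (fun s => W s * W s),
      Pexp_const_mul, Pexp_sub]
    unfold varP
    ring
  rw [e, ← Pexp_sub, ← Pexp_const_mul]
  refine Pexp_mono hp fun s => ?_
  nlinarith [key s, hVW s]

end Variance

section Penalty

variable {γ δ Cb : ℝ} {N n : ℕ} {p V W : 𝒮 → ℝ}

lemma max_sqrt_sub_le {c H v w d : ℝ} (hc : 0 < c) (hH : 0 < H) (hv : 0 ≤ v) (hw : 0 ≤ w)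
    (hd : 0 ≤ d) (hvw : w - v ≤ 2 * H * d) :
    max (√(c * w)) (2 * c * H) - max (√(c * v)) (2 * c * H) ≤ d / 2 := by
  have hcH : 0 < c * H := mul_pos hc hH
  rcases le_total (√(c * w)) (2 * c * H) with h | h
  · rw [max_eq_right h]
    linarith [le_max_right (√(c * v)) (2 * c * H)]
  · rw [max_eq_left h]
    set G := max (√(c * v)) (2 * c * H) with hG
    have hG1 : √(c * v) ≤ G := le_max_left _ _
    have hG2 : 2 * c * H ≤ G := le_max_right _ _
    have hG3 : c * v ≤ G ^ 2 := by
      rw [← Real.sq_sqrt (mul_nonneg hc.le hv)]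
      exact pow_le_pow_left₀ (Real.sqrt_nonneg _) hG1 2
    have hw2 := Real.sq_sqrt (mul_nonneg hc.le hw)
    by_contra! hlt
    have h1 : 4 * c * H ≤ √(c * w) + G := by linarith
    have h2 : (√(c * w) - G) * (√(c * w) + G) ≤ 2 * c * H * d := by nlinarith
    have h3 : d / 2 * (4 * c * H) < (√(c * w) - G) * (√(c * w) + G) := by
      calc d / 2 * (4 * c * H) ≤ d / 2 * (√(c * w) + G) :=
            mul_le_mul_of_nonneg_left h1 (by linarith)
        _ < _ := mul_lt_mul_of_pos_right hlt (by linarith)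
    linarith

lemma penalty_sub_le (hγ : 1 / 2 ≤ γ) (hγ1 : γ < 1) (hCb : 0 < Cb)
    (hL : 0 < Real.log ((N : ℝ) / ((1 - γ) * δ))) (hp : p ∈ stdSimplex ℝ 𝒮)
    (hVW : ∀ s, V s ≤ W s) (hV : ∀ s t, V s - V t ≤ 1 / (1 - γ))
    (hW : ∀ s t, W s - W t ≤ 1 / (1 - γ)) :
    penalty γ δ Cb N n p W - penalty γ δ Cb N n p V ≤ γ * (Pexp p W - Pexp p V) := by
  have hd : 0 ≤ Pexp p W - Pexp p V := sub_nonneg.2 (Pexp_mono hp hVW)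
  have hγ0 : 0 < 1 - γ := by linarith
  unfold penalty
  by_cases hn : n = 0
  · simp only [hn, if_true, sub_self]
    exact mul_nonneg (by linarith) hd
  · simp only [hn, if_false]
    have hn' : (0 : ℝ) < n := by positivity
    set L := Real.log ((N : ℝ) / ((1 - γ) * δ))
    have e1 : ∀ v : ℝ, Cb * L * v / n = Cb * L / n * v := fun v => by ring
    have e2 : 2 * Cb * L / ((1 - γ) * n) = 2 * (Cb * L / n) * (1 / (1 - γ)) := by
      field_simp
    rw [e1, e1, e2]
    have key := max_sqrt_sub_le (c := Cb * L / n) (H := 1 / (1 - γ)) (by positivity)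
      (by positivity) (varP_nonneg (V := V) hp) (varP_nonneg (V := W) hp) hd
      (varP_sub_varP_le hp hVW hV hW)
    set x := max (√(Cb * L / n * varP p W)) (2 * (Cb * L / n) * (1 / (1 - γ)))
    set y := max (√(Cb * L / n * varP p V)) (2 * (Cb * L / n) * (1 / (1 - γ)))
    have h2 : (Pexp p W - Pexp p V) / 2 ≤ γ * (Pexp p W - Pexp p V) := by nlinarith
    have h3 : min x (1 / (1 - γ)) ≤ min y (1 / (1 - γ)) + (Pexp p W - Pexp p V) / 2 := by
      rw [min_def y]
      split_ifs
      · exact (min_le_left _ _).trans (by linarith)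
      · exact (min_le_right _ _).trans (by linarith)
    linarith

lemma penalty_add_const (hp : p ∈ stdSimplex ℝ 𝒮) (c : ℝ) :
    penalty γ δ Cb N n p (fun s => V s + c) = penalty γ δ Cb N n p V := by
  simp only [penalty, varP_add_const hp]

lemma penalty_nonneg (hγ1 : γ < 1) : 0 ≤ penalty γ δ Cb N n p V := by
  have : 0 < 1 - γ := by linarith
  unfold penalty
  split_ifs
  · positivity
  · have h : 0 ≤ max (√(Cb * Real.log ((N : ℝ) / ((1 - γ) * δ)) * varP p V / n))
        (2 * Cb * Real.log ((N : ℝ) / ((1 - γ) * δ)) / ((1 - γ) * n)) :=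
      (Real.sqrt_nonneg _).trans (le_max_left _ _)
    have h' := le_min h (by positivity : 0 ≤ 1 / (1 - γ))
    positivity

/-- The pessimistic backup is monotone and commutes with shifts up to the factor `γ`. -/
lemma backup_le_add (hγ : 1 / 2 ≤ γ) (hγ1 : γ < 1) (hCb : 0 < Cb)
    (hL : 0 < Real.log ((N : ℝ) / ((1 - γ) * δ))) (hp : p ∈ stdSimplex ℝ 𝒮) {e : ℝ}
    (hVW : ∀ s, W s ≤ V s + e) (hV : ∀ s t, V s - V t ≤ 1 / (1 - γ))
    (hW : ∀ s t, W s - W t ≤ 1 / (1 - γ)) :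
    γ * Pexp p W - penalty γ δ Cb N n p W
      ≤ γ * Pexp p V - penalty γ δ Cb N n p V + γ * e := by
  have h := penalty_sub_le (n := n) (W := fun s => V s + e) hγ hγ1 hCb hL hp hVW hW
    (fun s t => by linarith [hV s t])
  rw [penalty_add_const hp, Pexp_add p V (fun _ => e), Pexp_const hp] at h
  linarith

end Penalty

section MatrixGame

lemma pay_le_pay_add {M M' : 𝒜 → ℬ → ℝ} {e : ℝ} {w : 𝒜 → ℝ} {z : ℬ → ℝ}
    (hw : w ∈ stdSimplex ℝ 𝒜) (hz : z ∈ stdSimplex ℝ ℬ) (h : ∀ a b, M a b ≤ M' a b + e) :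
    pay M w z ≤ pay M' w z + e := by
  have h1 : ∑ a, ∑ b, w a * z b * (M' a b + e) = pay M' w z + e := by
    simp only [mul_add, Finset.sum_add_distrib, pay]
    simp only [← Finset.sum_mul, ← Finset.mul_sum, hz.2, hw.2, mul_one, one_mul]
  rw [← h1]
  exact Finset.sum_le_sum fun a _ => Finset.sum_le_sum fun b _ =>
    mul_le_mul_of_nonneg_left (h a b) (mul_nonneg (hw.1 a) (hz.1 b))

lemma pay_zero (w : 𝒜 → ℝ) (z : ℬ → ℝ) : pay (fun _ _ => 0) w z = 0 := by simp [pay]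

variable {𝒮 : Type} [Nonempty 𝒜] [Nonempty ℬ] {Q R : 𝒮 → 𝒜 → ℬ → ℝ}

lemma valQ_zero (s : 𝒮) : valQ (fun (_ : 𝒮) (_ : 𝒜) (_ : ℬ) => 0) s = 0 := by
  simp [valQ, pay_zero]

lemma valQ_le_valQ_add {H e : ℝ} (hQ : ∀ s a b, 0 ≤ Q s a b) (hR : ∀ s a b, R s a b ≤ H)
    (hR0 : ∀ s a b, 0 ≤ R s a b)
    (h : ∀ s a b, Q s a b ≤ R s a b + e) (s : 𝒮) : valQ Q s ≤ valQ R s + e := by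
  have bdd : ∀ {Q : 𝒮 → 𝒜 → ℬ → ℝ}, (∀ s a b, 0 ≤ Q s a b) → ∀ w : stdSimplex ℝ 𝒜,
      BddBelow (Set.range fun z : stdSimplex ℝ ℬ => pay (Q s) w.1 z.1) := by
    rintro Q hQ w
    refine ⟨0, ?_⟩
    rintro _ ⟨z, rfl⟩
    have := pay_le_pay_add (M := fun _ _ => 0) (M' := Q s) (e := 0) w.2 z.2
      (fun a b => by simpa using hQ s a b)
    simpa [pay_zero] using this
  refine ciSup_le fun w => ?_
  have bddA : BddAbove (Set.range fun w : stdSimplex ℝ 𝒜 =>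
      ⨅ z : stdSimplex ℝ ℬ, pay (R s) w.1 z.1) := by
    refine ⟨H, ?_⟩
    rintro _ ⟨w, rfl⟩
    obtain ⟨z⟩ := (inferInstance : Nonempty (stdSimplex ℝ ℬ))
    refine (ciInf_le (bdd hR0 w) z).trans ?_
    have := pay_le_pay_add (M := R s) (M' := fun _ _ => 0) (e := H) w.2 z.2
      (fun a b => by simpa using hR s a b)
    simpa [pay_zero] using this
  have h1 : (⨅ z : stdSimplex ℝ ℬ, pay (Q s) w.1 z.1) - e
      ≤ ⨅ z : stdSimplex ℝ ℬ, pay (R s) w.1 z.1 := by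
    refine le_ciInf fun z => ?_
    have := ciInf_le (bdd hQ w) z
    linarith [pay_le_pay_add (M := Q s) (M' := R s) (e := e) w.2 z.2 (h s)]
  have h2 := le_ciSup bddA w
  unfold valQ
  linarith

lemma valQ_mem_Icc {H : ℝ} (hQ : ∀ s a b, 0 ≤ Q s a b ∧ Q s a b ≤ H) (s : 𝒮) :
    0 ≤ valQ Q s ∧ valQ Q s ≤ H := by
  constructor
  · have := valQ_le_valQ_add (Q := fun _ _ _ => 0) (R := Q) (H := H) (e := 0)
      (by simp) (fun s a b => (hQ s a b).2) (fun s a b => (hQ s a b).1)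
      (fun s a b => by simpa using (hQ s a b).1) s
    simpa [valQ_zero] using this
  · have := valQ_le_valQ_add (Q := Q) (R := fun _ _ _ => 0) (H := 0) (e := H)
      (fun s a b => (hQ s a b).1) (by simp) (by simp)
      (fun s a b => by simpa using (hQ s a b).2) s
    simpa [valQ_zero] using this

lemma abs_valQ_sub_le {H e : ℝ} (hQ : ∀ s a b, 0 ≤ Q s a b ∧ Q s a b ≤ H)
    (hR : ∀ s a b, 0 ≤ R s a b ∧ R s a b ≤ H) (h : ∀ s a b, |Q s a b - R s a b| ≤ e) (s : 𝒮) :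
    |valQ Q s - valQ R s| ≤ e := by
  have h1 := valQ_le_valQ_add (e := e) (fun s a b => (hQ s a b).1) (fun s a b => (hR s a b).2)
    (fun s a b => (hR s a b).1) (fun s a b => by linarith [(abs_le.1 (h s a b)).2]) s
  have h2 := valQ_le_valQ_add (e := e) (fun s a b => (hR s a b).1) (fun s a b => (hQ s a b).2)
    (fun s a b => (hQ s a b).1) (fun s a b => by linarith [(abs_le.1 (h s a b)).1]) s
  exact abs_le.2 ⟨by linarith, by linarith⟩

end MatrixGame

section BoxContraction

/-- The functions on state-action triples with values in `[0, H]`. -/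
def InBox (H : ℝ) (Q : 𝒮 → 𝒜 → ℬ → ℝ) : Prop := ∀ s a b, 0 ≤ Q s a b ∧ Q s a b ≤ H

/-- `T` preserves the box `[0, H]` and is a `γ`-contraction on it for the sup norm. -/
structure IsBoxContraction (γ H : ℝ) (T : (𝒮 → 𝒜 → ℬ → ℝ) → 𝒮 → 𝒜 → ℬ → ℝ) : Prop where
  mapsTo : ∀ Q, InBox H Q → InBox H (T Q)
  contract : ∀ Q R, InBox H Q → InBox H R → ∀ e, 0 ≤ e → (∀ s a b, |Q s a b - R s a b| ≤ e) →
    ∀ s a b, |T Q s a b - T R s a b| ≤ γ * e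

/-- The operator `T` with its output at the triple `x` replaced by the number `u`. -/
def pinned [DecidableEq 𝒮] [DecidableEq 𝒜] [DecidableEq ℬ]
    (T : (𝒮 → 𝒜 → ℬ → ℝ) → 𝒮 → 𝒜 → ℬ → ℝ) (x : 𝒮 × 𝒜 × ℬ) (u : ℝ)
    (Q : 𝒮 → 𝒜 → ℬ → ℝ) : 𝒮 → 𝒜 → ℬ → ℝ :=
  fun s a b => if (s, a, b) = x then u else T Q s a b

lemma isBoxContraction_TpeMinus [Nonempty 𝒜] [Nonempty ℬ] {γ δ Cb : ℝ} {N : ℕ}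
    (hγ : 1 / 2 ≤ γ) (hγ1 : γ < 1) (hCb : 0 < Cb)
    (hL : 0 < Real.log ((N : ℝ) / ((1 - γ) * δ))) (n : 𝒮 → 𝒜 → ℬ → ℕ)
    {Ph : 𝒮 → 𝒜 → ℬ → 𝒮 → ℝ} (hPh : IsKernel Ph) {rh : 𝒮 → 𝒜 → ℬ → ℝ} (hrh : IsReward rh) :
    IsBoxContraction γ (1 / (1 - γ)) (TpeMinus γ δ Cb N n Ph rh) := by
  have hγ0 : 0 < 1 - γ := by linarith
  have osc : ∀ {Q : 𝒮 → 𝒜 → ℬ → ℝ}, InBox (1 / (1 - γ)) Q →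
      ∀ s t, valQ Q s - valQ Q t ≤ 1 / (1 - γ) := fun hQ s t => by
    linarith [(valQ_mem_Icc hQ s).2, (valQ_mem_Icc hQ t).1]
  constructor
  · intro Q hQ s a b
    refine ⟨le_max_right _ _, max_le ?_ (by positivity)⟩
    have h1 : Pexp (Ph s a b) (valQ Q) ≤ 1 / (1 - γ) := by
      rw [← Pexp_const (hPh s a b) (1 / (1 - γ))]
      exact Pexp_mono (hPh s a b) fun t => (valQ_mem_Icc hQ t).2
    have h2 : γ * Pexp (Ph s a b) (valQ Q) ≤ γ * (1 / (1 - γ)) :=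
      mul_le_mul_of_nonneg_left h1 (by linarith)
    have h3 : 1 + γ * (1 / (1 - γ)) = 1 / (1 - γ) := by
      field_simp
      ring
    have h4 : 0 ≤ penalty γ δ Cb N (n s a b) (Ph s a b) (valQ Q) := penalty_nonneg hγ1
    linarith [(hrh s a b).2]
  · have one_side : ∀ Q R : 𝒮 → 𝒜 → ℬ → ℝ, InBox (1 / (1 - γ)) Q → InBox (1 / (1 - γ)) R →
        ∀ e, 0 ≤ e → (∀ s a b, |Q s a b - R s a b| ≤ e) → ∀ s a b,
          TpeMinus γ δ Cb N n Ph rh Q s a b ≤ TpeMinus γ δ Cb N n Ph rh R s a b + γ * e := by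
      intro Q R hQ hR e he h s a b
      have h1 := backup_le_add (n := n s a b) (V := valQ R) (W := valQ Q) (e := e) hγ hγ1 hCb hL
        (hPh s a b) (fun t => by linarith [(abs_le.1 (abs_valQ_sub_le hQ hR h t)).2])
        (osc hR) (osc hQ)
      have h2 : 0 ≤ γ * e := mul_nonneg (by linarith) he
      have h4 : 0 ≤ TpeMinus γ δ Cb N n Ph rh R s a b := le_max_right _ _
      refine max_le ?_ (by linarith)
      have h3 : rh s a b + γ * Pexp (Ph s a b) (valQ R)
        - penalty γ δ Cb N (n s a b) (Ph s a b) (valQ R) ≤ TpeMinus γ δ Cb N n Ph rh R s a b :=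
        le_max_left _ _
      linarith
    intro Q R hQ hR e he h s a b
    have h1 := one_side Q R hQ hR e he h s a b
    have h2 := one_side R Q hR hQ e he (fun s a b => by rw [abs_sub_comm]; exact h s a b) s a b
    exact abs_le.2 ⟨by linarith, by linarith⟩

section Iterates

variable {𝒮 𝒜 ℬ : Type} {γ H u : ℝ} {T : (𝒮 → 𝒜 → ℬ → ℝ) → 𝒮 → 𝒜 → ℬ → ℝ} {x : 𝒮 × 𝒜 × ℬ}

lemma IsBoxContraction.iterate_mem (hT : IsBoxContraction γ H T) {Q : 𝒮 → 𝒜 → ℬ → ℝ}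
    (hQ : InBox H Q) (k : ℕ) : InBox H (T^[k] Q) := by
  induction k with
  | zero => exact hQ
  | succ k ih => rw [Function.iterate_succ_apply']; exact hT.mapsTo _ ih

lemma IsBoxContraction.iterate_sub_le (hT : IsBoxContraction γ H T) (hγ : 0 ≤ γ)
    {Q R : 𝒮 → 𝒜 → ℬ → ℝ} (hQ : InBox H Q) (hR : InBox H R) {e : ℝ} (he : 0 ≤ e)
    (h : ∀ s a b, |Q s a b - R s a b| ≤ e) (k : ℕ) :
    ∀ s a b, |T^[k] Q s a b - T^[k] R s a b| ≤ γ ^ k * e := by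
  induction k with
  | zero => simpa using h
  | succ k ih =>
    simp only [Function.iterate_succ_apply']
    rw [pow_succ', mul_assoc]
    exact hT.contract _ _ (hT.iterate_mem hQ k) (hT.iterate_mem hR k) _ (by positivity) ih

/-- A point almost fixed by a contraction stays close to its orbit. -/
lemma IsBoxContraction.iterate_sub_self_le (hT : IsBoxContraction γ H T)
    (hγ1 : γ < 1) {Q : 𝒮 → 𝒜 → ℬ → ℝ} (hQ : InBox H Q) {e : ℝ} (he : 0 ≤ e)
    (h : ∀ s a b, |T Q s a b - Q s a b| ≤ e) (k : ℕ) :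
    ∀ s a b, |T^[k] Q s a b - Q s a b| ≤ e / (1 - γ) := by
  have h1 : 0 < 1 - γ := by linarith
  induction k with
  | zero => intro s a b; simpa using div_nonneg he h1.le
  | succ k ih =>
    intro s a b
    rw [Function.iterate_succ_apply']
    have h2 := hT.contract _ _ (hT.iterate_mem hQ k) hQ _ (by positivity) ih s a b
    have h3 : γ * (e / (1 - γ)) + e = e / (1 - γ) := by field_simp; ring
    calc |T (T^[k] Q) s a b - Q s a b|
        ≤ |T (T^[k] Q) s a b - T Q s a b| + |T Q s a b - Q s a b| := abs_sub_le _ _ _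
      _ ≤ e / (1 - γ) := by linarith [h s a b]

lemma InBox.zero (hH : 0 ≤ H) : InBox H (fun (_ : 𝒮) (_ : 𝒜) (_ : ℬ) => (0 : ℝ)) :=
  fun _ _ _ => ⟨le_rfl, hH⟩

variable [DecidableEq 𝒮] [DecidableEq 𝒜] [DecidableEq ℬ]

lemma IsBoxContraction.pinned (hT : IsBoxContraction γ H T) (hγ : 0 ≤ γ) (hu0 : 0 ≤ u)
    (huH : u ≤ H) : IsBoxContraction γ H (pinned T x u) := by
  constructor
  · intro Q hQ s a b
    unfold ZSMG.pinned
    split_ifs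
    exacts [⟨hu0, huH⟩, hT.mapsTo Q hQ s a b]
  · intro Q R hQ hR e he h s a b
    unfold ZSMG.pinned
    split_ifs
    · simpa using mul_nonneg hγ he
    · exact hT.contract Q R hQ hR e he h s a b

lemma IsBoxContraction.pinned_iterate_sub_le (hT : IsBoxContraction γ H T) (hγ : 0 ≤ γ)
    (hγ1 : γ < 1) {u' : ℝ} (hu0 : 0 ≤ u) (huH : u ≤ H) (hu0' : 0 ≤ u') (huH' : u' ≤ H) (k : ℕ) :
    ∀ s a b, |(ZSMG.pinned T x u)^[k] (fun _ _ _ => 0) s a b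
      - (ZSMG.pinned T x u')^[k] (fun _ _ _ => 0) s a b| ≤ |u - u'| := by
  have h0 : InBox H (fun (_ : 𝒮) (_ : 𝒜) (_ : ℬ) => (0 : ℝ)) := InBox.zero (hu0.trans huH)
  induction k with
  | zero => simp
  | succ k ih =>
    intro s a b
    simp only [Function.iterate_succ_apply']
    conv_lhs => unfold ZSMG.pinned
    split_ifs
    · exact le_rfl
    · have h := hT.contract _ _ ((hT.pinned hγ hu0 huH).iterate_mem h0 k)
        ((hT.pinned hγ hu0' huH').iterate_mem h0 k) _ (abs_nonneg _) ih s a b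
      exact h.trans (mul_le_of_le_one_left (abs_nonneg _) hγ1.le)

/-- The iterates of `T` are close to those of `T` pinned at the value reached at `x`. -/
lemma IsBoxContraction.iterate_sub_pinned_iterate_le (hT : IsBoxContraction γ (1 / (1 - γ)) T)
    (hγ : 0 ≤ γ) (hγ1 : γ < 1) (h1 : ∀ s a b, T (fun _ _ _ => 0) s a b ≤ 1) (k : ℕ)
    (hu : u = T^[k] (fun _ _ _ => 0) x.1 x.2.1 x.2.2) :
    ∀ s a b, |T^[k] (fun _ _ _ => 0) s a b
      - (ZSMG.pinned T x u)^[k] (fun _ _ _ => 0) s a b| ≤ 2 * (γ ^ k * (1 / (1 - γ))) := by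
  have hγ0 : 0 < 1 - γ := by linarith
  have h0 : InBox (1 / (1 - γ)) (fun (_ : 𝒮) (_ : 𝒜) (_ : ℬ) => (0 : ℝ)) :=
    InBox.zero (by positivity)
  have hQ := hT.iterate_mem h0 k
  have hU := hT.pinned (x := x) hγ (hu ▸ (hQ _ _ _).1) (hu ▸ (hQ _ _ _).2)
  set Q := T^[k] (fun _ _ _ => 0) with hQdef
  have step : ∀ s a b, |T Q s a b - Q s a b| ≤ γ ^ k := by
    have h := hT.iterate_sub_le hγ (hT.mapsTo _ h0) h0 zero_le_one (fun s a b => by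
      rw [sub_zero, abs_of_nonneg (hT.mapsTo _ h0 s a b).1]; exact h1 s a b) k
    rw [← Function.iterate_succ_apply, Function.iterate_succ_apply'] at h
    simpa using h
  have step' : ∀ s a b, |ZSMG.pinned T x u Q s a b - Q s a b| ≤ γ ^ k := by
    intro s a b
    unfold ZSMG.pinned
    split_ifs with h
    · subst h
      simpa [hu] using pow_nonneg hγ k
    · exact step s a b
  intro s a b
  have h2 := hU.iterate_sub_self_le hγ1 hQ (pow_nonneg hγ k) step' k s a b
  have h3 := hU.iterate_sub_le hγ hQ h0 (e := 1 / (1 - γ)) (by positivity) (fun s a b => by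
    rw [sub_zero, abs_of_nonneg (hQ s a b).1]; exact (hQ s a b).2) k s a b
  rw [abs_sub_comm] at h2
  have h4 : γ ^ k / (1 - γ) = γ ^ k * (1 / (1 - γ)) := by ring
  calc _ ≤ _ := abs_sub_le _ ((ZSMG.pinned T x u)^[k] Q s a b) _
    _ ≤ _ := by linarith

/-- The pinning value may be taken on a grid of mesh `1 / N`. -/
lemma IsBoxContraction.exists_grid_pinned (hT : IsBoxContraction γ (1 / (1 - γ)) T)
    (hγ : 0 ≤ γ) (hγ1 : γ < 1) (h1 : ∀ s a b, T (fun _ _ _ => 0) s a b ≤ 1) {k N : ℕ}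
    (hN : 0 < N) (hk : γ ^ k * (1 / (1 - γ)) ≤ 1 / N) (x : 𝒮 × 𝒜 × ℬ) :
    ∃ j ∈ Finset.range (⌊1 / (1 - γ) * N⌋₊ + 1),
      ∀ s a b, |T^[k] (fun _ _ _ => 0) s a b
        - (ZSMG.pinned T x (j / N))^[k] (fun _ _ _ => 0) s a b| ≤ 3 / N := by
  have hγ0 : 0 < 1 - γ := by linarith
  have hN' : (0 : ℝ) < N := by exact_mod_cast hN
  have h0 : InBox (1 / (1 - γ)) (fun (_ : 𝒮) (_ : 𝒜) (_ : ℬ) => (0 : ℝ)) :=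
    InBox.zero (by positivity)
  obtain ⟨u, hu⟩ : ∃ u, u = T^[k] (fun _ _ _ => 0) x.1 x.2.1 x.2.2 := ⟨_, rfl⟩
  have hu0 : 0 ≤ u := hu ▸ (hT.iterate_mem h0 k _ _ _).1
  have huH : u ≤ 1 / (1 - γ) := hu ▸ (hT.iterate_mem h0 k _ _ _).2
  have hf1 : (⌊u * N⌋₊ : ℝ) ≤ u * N := Nat.floor_le (by positivity)
  have hf2 : u * N < ⌊u * N⌋₊ + 1 := Nat.lt_floor_add_one _
  have hju : (⌊u * N⌋₊ : ℝ) / N ≤ u := (div_le_iff₀ hN').2 hf1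
  have hju' : |u - (⌊u * N⌋₊ : ℝ) / N| ≤ 1 / N := by
    rw [abs_of_nonneg (by linarith), sub_le_iff_le_add, ← add_div, le_div_iff₀ hN']
    linarith
  refine ⟨⌊u * N⌋₊, ?_, fun s a b => ?_⟩
  · rw [Finset.mem_range, Nat.lt_succ_iff]
    gcongr
  · have h2 := hT.iterate_sub_pinned_iterate_le hγ hγ1 h1 k hu s a b
    have h3 := hT.pinned_iterate_sub_le (x := x) hγ hγ1 hu0 huH
      (by positivity : 0 ≤ (⌊u * N⌋₊ : ℝ) / N) (hju.trans huH) k s a b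
    have h4 : (3 : ℝ) / N = 2 * (1 / N) + 1 / N := by ring
    calc _ ≤ _ := abs_sub_le _ ((ZSMG.pinned T x u)^[k] (fun _ _ _ => 0) s a b) _
      _ ≤ _ := by linarith

end Iterates

end BoxContraction

section Dataset

/-- The state-action triple of a transition. -/
def triple {𝒮 𝒜 ℬ : Type} (y : 𝒮 × 𝒜 × ℬ × 𝒮) : 𝒮 × 𝒜 × ℬ := (y.1, y.2.1, y.2.2.1)

section Probability

variable {N : ℕ} {db : 𝒮 → 𝒜 → ℬ → ℝ} {P : 𝒮 → 𝒜 → ℬ → 𝒮 → ℝ}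

lemma dsExp_add (f g : (Fin N → 𝒮 × 𝒜 × ℬ × 𝒮) → ℝ) :
    dsExp db P (fun D => f D + g D) = dsExp db P f + dsExp db P g := by
  simp [dsExp, mul_add, Finset.sum_add_distrib]

lemma dsExp_sum {κ : Type} (K : Finset κ) (f : κ → (Fin N → 𝒮 × 𝒜 × ℬ × 𝒮) → ℝ) :
    dsExp db P (fun D => ∑ k ∈ K, f k D) = ∑ k ∈ K, dsExp db P (f k) := by
  simp only [dsExp, Finset.mul_sum]
  exact Finset.sum_comm

lemma dsExp_const_mul (c : ℝ) (f : (Fin N → 𝒮 × 𝒜 × ℬ × 𝒮) → ℝ) :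
    dsExp db P (fun D => c * f D) = c * dsExp db P f := by
  simp only [dsExp, Finset.mul_sum]
  exact Finset.sum_congr rfl fun D _ => by ring

lemma IsDist3.sum_le_one (hdb : IsDist3 db) (K : Finset (𝒮 × 𝒜 × ℬ)) :
    ∑ x ∈ K, db x.1 x.2.1 x.2.2 ≤ 1 := by
  have h : ∑ x : 𝒮 × 𝒜 × ℬ, db x.1 x.2.1 x.2.2 = 1 := by
    simpa only [Fintype.sum_prod_type] using hdb.2
  rw [← h]
  exact Finset.sum_le_sum_of_subset_of_nonneg (Finset.subset_univ _) fun x _ _ => hdb.1 _ _ _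

/-- Expectation of a product of one factor for each transition. -/
lemma dsExp_prod (f : 𝒮 × 𝒜 × ℬ × 𝒮 → ℝ) :
    dsExp db P (fun D : Fin N → 𝒮 × 𝒜 × ℬ × 𝒮 => ∏ i, f (D i))
      = (∑ s, ∑ a, ∑ b, db s a b * ∑ t, P s a b t * f (s, a, b, t)) ^ N := by
  have h : ∀ D : Fin N → 𝒮 × 𝒜 × ℬ × 𝒮, dsWeight db P D * ∏ i, f (D i)
      = ∏ i, (db (D i).1 (D i).2.1 (D i).2.2.1
          * P (D i).1 (D i).2.1 (D i).2.2.1 (D i).2.2.2 * f (D i)) := fun D => by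
    rw [dsWeight, ← Finset.prod_mul_distrib]
  simp only [dsExp, h]
  rw [← Fintype.piFinset_univ, Finset.sum_prod_piFinset Finset.univ (fun (_ : Fin N) y =>
    db y.1 y.2.1 y.2.2.1 * P y.1 y.2.1 y.2.2.1 y.2.2.2 * f y)]
  simp [Fintype.sum_prod_type, Finset.mul_sum, mul_assoc]

lemma dsExp_one (hP : IsKernel P) (hdb : IsDist3 db) :
    dsExp db P (fun _ : Fin N → 𝒮 × 𝒜 × ℬ × 𝒮 => 1) = 1 := by
  have h := dsExp_prod (N := N) (db := db) (P := P) (fun _ => 1)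
  simpa [(hP _ _ _).2, hdb.2] using h

lemma dsWeight_nonneg (hP : IsKernel P) (hdb : IsDist3 db) (D : Fin N → 𝒮 × 𝒜 × ℬ × 𝒮) :
    0 ≤ dsWeight db P D :=
  Finset.prod_nonneg fun _ _ => mul_nonneg (hdb.1 _ _ _) ((hP _ _ _).1 _)

lemma one_sub_le_dsProb (hP : IsKernel P) (hdb : IsDist3 db) {δ : ℝ}
    {E : Set (Fin N → 𝒮 × 𝒜 × ℬ × 𝒮)} {g : (Fin N → 𝒮 × 𝒜 × ℬ × 𝒮) → ℝ} (hg : ∀ D, 0 ≤ g D)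
    (hE : ∀ D, D ∉ E → 1 ≤ g D) (hgδ : dsExp db P g ≤ δ) : 1 - δ ≤ dsProb db P E := by
  have h1 : dsExp db P (fun _ : Fin N → 𝒮 × 𝒜 × ℬ × 𝒮 => 1) ≤ dsProb db P E + dsExp db P g := by
    unfold dsExp dsProb
    rw [← Finset.sum_add_distrib]
    refine Finset.sum_le_sum fun D _ => ?_
    have hw := dsWeight_nonneg hP hdb D
    by_cases hD : D ∈ E
    · rw [Set.indicator_of_mem hD]
      nlinarith [mul_nonneg hw (hg D)]
    · rw [Set.indicator_of_notMem hD]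
      nlinarith [mul_le_mul_of_nonneg_left (hE D hD) hw]
  rw [dsExp_one hP hdb] at h1
  linarith

/-- Integrating a product of factors attached to the coordinates in `I`, each of which depends on
its own coordinate and on the coordinates outside `I`. -/
lemma sum_prod_mul_prod_le_one [Nonempty 𝒮] {ι : Type} [Fintype ι] [DecidableEq ι]
    {p : ι → 𝒮 → ℝ} (hp : ∀ i, p i ∈ stdSimplex ℝ 𝒮) (I : ι → Prop) [DecidablePred I]
    {ψ : (ι → 𝒮) → 𝒮 → ℝ} (hψ : ∀ S S', (∀ i, ¬ I i → S i = S' i) → ψ S = ψ S')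
    (hψ0 : ∀ S t, 0 ≤ ψ S t) (hψ1 : ∀ S i, I i → ∑ t, p i t * ψ S t ≤ 1) :
    ∑ S : ι → 𝒮, (∏ i, p i (S i)) * ∏ i, (if I i then ψ S (S i) else 1) ≤ 1 := by
  have sum_prod : ∀ {κ : Type} [Fintype κ] [DecidableEq κ] (f : κ → 𝒮 → ℝ),
      ∑ S : κ → 𝒮, ∏ i, f i (S i) = ∏ i, ∑ t, f i t := fun f => by
    rw [← Fintype.piFinset_univ, Finset.sum_prod_piFinset]
  let e := Equiv.piEquivPiSubtypeProd I (fun _ => 𝒮)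
  have he : ∀ S₁ S₂ i (h : I i), e.symm (S₁, S₂) i = S₁ ⟨i, h⟩ := fun S₁ S₂ i h => by
    simp [e, Equiv.piEquivPiSubtypeProd, h]
  have he' : ∀ S₁ S₂ i (h : ¬ I i), e.symm (S₁, S₂) i = S₂ ⟨i, h⟩ := fun S₁ S₂ i h => by
    simp [e, Equiv.piEquivPiSubtypeProd, h]
  rw [← e.symm.sum_comp, Fintype.sum_prod_type, Finset.sum_comm]
  let S₀ : {i // I i} → 𝒮 := fun _ => Classical.arbitrary 𝒮
  have key : ∀ S₂ S₁, (∏ i, p i (e.symm (S₁, S₂) i)) * ∏ i, (if I i then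
        ψ (e.symm (S₁, S₂)) (e.symm (S₁, S₂) i) else 1)
      = (∏ i : {i // ¬ I i}, p i.1 (S₂ i))
        * ∏ i : {i // I i}, p i.1 (S₁ i) * ψ (e.symm (S₀, S₂)) (S₁ i) := by
    intro S₂ S₁
    rw [hψ (e.symm (S₁, S₂)) (e.symm (S₀, S₂)) fun i h => by rw [he' _ _ i h, he' _ _ i h],
      ← Finset.prod_mul_distrib, ← Fintype.prod_subtype_mul_prod_subtype I, mul_comm]
    congr 1
    · refine Finset.prod_congr rfl fun i _ => ?_
      rw [if_neg i.2, he' _ _ i i.2, mul_one]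
    · refine Finset.prod_congr rfl fun i _ => ?_
      rw [if_pos i.2, he _ _ i i.2]
  simp only [key, ← Finset.mul_sum]
  calc ∑ S₂ : {i // ¬ I i} → 𝒮, (∏ i : {i // ¬ I i}, p i.1 (S₂ i))
        * ∑ S₁ : {i // I i} → 𝒮, ∏ i : {i // I i}, p i.1 (S₁ i) * ψ (e.symm (S₀, S₂)) (S₁ i)
      ≤ ∑ S₂ : {i // ¬ I i} → 𝒮, (∏ i : {i // ¬ I i}, p i.1 (S₂ i)) * 1 := by
        refine Finset.sum_le_sum fun S₂ _ => mul_le_mul_of_nonneg_left ?_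
          (Finset.prod_nonneg fun i _ => (hp i).1 _)
        rw [sum_prod fun (i : {i // I i}) t => p i t * ψ (e.symm (S₀, S₂)) t]
        exact Finset.prod_le_one
          (fun i _ => Finset.sum_nonneg fun t _ => mul_nonneg ((hp i).1 t) (hψ0 _ t))
          (fun i _ => hψ1 _ i i.2)
    _ = 1 := by
        simp only [mul_one]
        rw [sum_prod fun (i : {i // ¬ I i}) t => p i t]
        simp [(hp _).2]

/-- Exponential moment bound for the squared deviation of a bounded function. -/
lemma sum_mul_exp_sq_dev_le_one {p W : 𝒮 → ℝ} (hp : p ∈ stdSimplex ℝ 𝒮) {H : ℝ} (hH : 0 < H)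
    (h0 : ∀ s, 0 ≤ W s) (hWH : ∀ s, W s ≤ H) :
    ∑ t, p t * Real.exp ((W t - Pexp p W) ^ 2 / (4 * H ^ 2) - 5 / 16 * varP p W / H ^ 2) ≤ 1 := by
  have hm0 : 0 ≤ Pexp p W := Finset.sum_nonneg fun t _ => mul_nonneg (hp.1 t) (h0 t)
  have hmH : Pexp p W ≤ H := by
    rw [← Pexp_const hp H]
    exact Pexp_mono hp hWH
  have h1 : ∀ t, Real.exp ((W t - Pexp p W) ^ 2 / (4 * H ^ 2))
      ≤ 5 / (16 * H ^ 2) * (W t - Pexp p W) ^ 2 + 1 := by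
    intro t
    set y := (W t - Pexp p W) ^ 2 / (4 * H ^ 2) with hy
    have hy0 : 0 ≤ y := by positivity
    have hy1 : y ≤ 1 / 4 := by
      rw [hy, div_le_iff₀ (by positivity)]
      have : (W t - Pexp p W) ^ 2 ≤ H ^ 2 :=
        sq_le_sq' (by linarith [h0 t]) (by linarith [hWH t])
      linarith
    have h2 := (abs_le.1 (Real.abs_exp_sub_one_sub_id_le (x := y)
      (by rw [abs_of_nonneg hy0]; linarith))).2
    have h3 : 5 / (16 * H ^ 2) * (W t - Pexp p W) ^ 2 = 5 / 4 * y := by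
      rw [hy]
      field_simp
      ring
    rw [h3]
    nlinarith
  have h2 : ∑ t, p t * Real.exp ((W t - Pexp p W) ^ 2 / (4 * H ^ 2))
      ≤ Real.exp (5 / 16 * varP p W / H ^ 2) := by
    have h3 := Pexp_mono hp h1
    rw [Pexp_add p (fun t => 5 / (16 * H ^ 2) * (W t - Pexp p W) ^ 2) (fun _ => 1),
      Pexp_const hp, Pexp_const_mul, ← varP_eq_Pexp_sq_sub hp] at h3
    refine h3.trans (le_trans (le_of_eq ?_) (Real.add_one_le_exp _))
    ring
  simp only [Real.exp_sub, ← mul_div_assoc, ← Finset.sum_div]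
  exact (div_le_one (Real.exp_pos _)).2 h2

end Probability

variable [DecidableEq 𝒮] [DecidableEq 𝒜] [DecidableEq ℬ] {N : ℕ}

section Empirical

variable {𝒜 ℬ : Type} [DecidableEq 𝒜] [DecidableEq ℬ]

variable (D : Fin N → 𝒮 × 𝒜 × ℬ × 𝒮) (s : 𝒮) (a : 𝒜) (b : ℬ)

lemma cnt_mul_Pexp_Phat (h : cnt D s a b ≠ 0) (f : 𝒮 → ℝ) :
    (cnt D s a b : ℝ) * Pexp (Phat D s a b) f
      = ∑ i, if triple (D i) = (s, a, b) then f (D i).2.2.2 else 0 := by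
  have h' : (cnt D s a b : ℝ) ≠ 0 := by exact_mod_cast h
  have h1 : (cnt D s a b : ℝ) * Pexp (Phat D s a b) f = ∑ t, (cntT D s a b t : ℝ) * f t := by
    simp only [Pexp, Phat, if_neg h, Finset.mul_sum]
    exact Finset.sum_congr rfl fun t _ => by field_simp
  rw [h1]
  simp only [cntT, Finset.card_filter, Nat.cast_sum, Finset.sum_mul]
  rw [Finset.sum_comm]
  refine Finset.sum_congr rfl fun i _ => ?_
  obtain ⟨s', a', b', t'⟩ := D i
  by_cases hx : s' = s ∧ a' = a ∧ b' = b
  · obtain ⟨rfl, rfl, rfl⟩ := hx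
    simp [triple]
  · have hne : ∀ t, ¬ ((s', a', b', t') = (s, a, b, t)) := fun t e => hx (by simp_all)
    have hne' : ¬ triple (s', a', b', t') = (s, a, b) := fun e => hx (by simpa [triple] using e)
    simp [hne, hne']

lemma cnt_eq_sum {𝒮 : Type} [DecidableEq 𝒮] (D : Fin N → 𝒮 × 𝒜 × ℬ × 𝒮) (s : 𝒮) :
    (cnt D s a b : ℝ) = ∑ i, if triple (D i) = (s, a, b) then 1 else 0 := by
  simp [cnt, triple]

lemma Phat_mem_stdSimplex [Nonempty 𝒮] : Phat D s a b ∈ stdSimplex ℝ 𝒮 := by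
  refine ⟨fun t => ?_, ?_⟩
  · unfold Phat
    split_ifs <;> positivity
  · by_cases h : cnt D s a b = 0
    · simp [Phat, h]
    · have h1 := cnt_mul_Pexp_Phat D s a b h (fun _ => 1)
      rw [← cnt_eq_sum] at h1
      have h' : (cnt D s a b : ℝ) ≠ 0 := by exact_mod_cast h
      simpa [Pexp] using (mul_eq_left₀ h').1 h1

end Empirical

/-- The datasets `D` and `D'` differ at most in the successor states observed at `x`. -/
def AgreeOff (x : 𝒮 × 𝒜 × ℬ) (D D' : Fin N → 𝒮 × 𝒜 × ℬ × 𝒮) : Prop :=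
  (∀ i, triple (D i) = triple (D' i)) ∧ ∀ i, triple (D i) ≠ x → D i = D' i

lemma pinned_TpeMinus_congr (γ δ Cb : ℝ) (r : 𝒮 → 𝒜 → ℬ → ℝ) {x : 𝒮 × 𝒜 × ℬ}
    {D D' : Fin N → 𝒮 × 𝒜 × ℬ × 𝒮} (h : AgreeOff x D D') (u : ℝ) :
    pinned (TpeMinus γ δ Cb N (cnt D) (Phat D) (rhat r D)) x u
      = pinned (TpeMinus γ δ Cb N (cnt D') (Phat D') (rhat r D')) x u := by
  have hc : cnt D = cnt D' := by
    funext s a b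
    have : (cnt D s a b : ℝ) = cnt D' s a b := by simp only [cnt_eq_sum, h.1]
    exact_mod_cast this
  have hP : ∀ s a b, (s, a, b) ≠ x → Phat D s a b = Phat D' s a b := by
    intro s a b hx
    funext t
    have hT : cntT D s a b t = cntT D' s a b t := by
      unfold cntT
      congr 1
      ext i
      simp only [Finset.mem_filter, Finset.mem_univ, true_and]
      by_cases hi : triple (D i) = x
      · have h1 : D i ≠ (s, a, b, t) := fun e => hx (by rw [← hi, e]; rfl)
        have h2 : D' i ≠ (s, a, b, t) := fun e => hx (by rw [← hi, h.1 i, e]; rfl)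
        simp [h1, h2]
      · rw [h.2 i hi]
    simp only [Phat, hc, hT]
  funext Q s a b
  unfold pinned
  split_ifs with hx
  · rfl
  · simp only [TpeMinus, rhat, hP s a b hx, hc]

section Probability

variable {db : 𝒮 → 𝒜 → ℬ → ℝ} {P : 𝒮 → 𝒜 → ℬ → 𝒮 → ℝ}

lemma dsExp_exp_neg_cnt_le (hP : IsKernel P) (hdb : IsDist3 db) (s : 𝒮) (a : 𝒜) (b : ℬ) :
    dsExp db P (fun D : Fin N → 𝒮 × 𝒜 × ℬ × 𝒮 => Real.exp (-(cnt D s a b : ℝ)))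
      ≤ Real.exp (-(N * db s a b / 2)) := by
  have e1 : (fun D : Fin N → 𝒮 × 𝒜 × ℬ × 𝒮 => Real.exp (-(cnt D s a b : ℝ)))
      = fun D => ∏ i, if triple (D i) = (s, a, b) then Real.exp (-1) else 1 := by
    funext D
    rw [cnt_eq_sum, ← Finset.sum_neg_distrib, Real.exp_sum]
    refine Finset.prod_congr rfl fun i _ => ?_
    split_ifs <;> simp
  rw [e1, dsExp_prod (fun y => if triple y = (s, a, b) then Real.exp (-1) else 1)]
  have e2 : ∀ s' a' b', db s' a' b' * ∑ t, P s' a' b' t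
        * (if triple (s', a', b', t) = (s, a, b) then Real.exp (-1) else 1)
      = db s' a' b'
        - if (s', a', b') = (s, a, b) then db s' a' b' * (1 - Real.exp (-1)) else 0 := by
    intro s' a' b'
    have ht : ∀ t, triple (s', a', b', t) = (s', a', b') := fun _ => rfl
    simp only [ht]
    rw [← Finset.sum_mul, (hP s' a' b').2]
    split_ifs <;> ring
  have e3 : ∑ s', ∑ a', ∑ b', (if (s', a', b') = (s, a, b) then
      db s' a' b' * (1 - Real.exp (-1)) else 0) = db s a b * (1 - Real.exp (-1)) := by
    have h := Finset.sum_ite_eq' Finset.univ (s, a, b)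
      (fun x : 𝒮 × 𝒜 × ℬ => db x.1 x.2.1 x.2.2 * (1 - Real.exp (-1)))
    simpa only [Fintype.sum_prod_type, Finset.mem_univ, if_true] using h
  simp only [e2, Finset.sum_sub_distrib, e3, hdb.2]
  have h1 : Real.exp (-1) ≤ 1 / 2 := by
    rw [Real.exp_neg, ← one_div]
    exact one_div_le_one_div_of_le two_pos (by linarith [Real.add_one_le_exp (1 : ℝ)])
  have hd := hdb.1 s a b
  have hd1 : db s a b ≤ 1 := by simpa using hdb.sum_le_one {(s, a, b)}
  have h2 : 0 < Real.exp (-1) := Real.exp_pos _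
  calc (1 - db s a b * (1 - Real.exp (-1))) ^ N
      ≤ (Real.exp (-(db s a b / 2))) ^ N := by
        refine pow_le_pow_left₀ (by nlinarith) ?_ N
        nlinarith [Real.add_one_le_exp (-(db s a b / 2))]
    _ = _ := by rw [← Real.exp_nat_mul]; ring_nf

/-- A dataset is a sequence of triples together with a sequence of successor states. -/
def datasetEquiv (𝒮 𝒜 ℬ : Type) (N : ℕ) :
    (Fin N → 𝒮 × 𝒜 × ℬ) × (Fin N → 𝒮) ≃ (Fin N → 𝒮 × 𝒜 × ℬ × 𝒮) where
  toFun q i := ((q.1 i).1, (q.1 i).2.1, (q.1 i).2.2, q.2 i)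
  invFun D := (fun i => triple (D i), fun i => (D i).2.2.2)
  left_inv _ := rfl
  right_inv _ := rfl

/-- Given the data away from `(s, a, b)`, the successor states observed at `(s, a, b)` are
independent draws from `P s a b`, so a product over them of factors of mean at most one has mean
at most one. -/
lemma dsExp_prod_le_one [Nonempty 𝒮] (hP : IsKernel P) (hdb : IsDist3 db) {s : 𝒮} {a : 𝒜} {b : ℬ}
    {φ : (Fin N → 𝒮 × 𝒜 × ℬ × 𝒮) → 𝒮 → ℝ} (hφ : ∀ D D', AgreeOff (s, a, b) D D' → φ D = φ D')
    (hφ0 : ∀ D t, 0 ≤ φ D t) (hφ1 : ∀ D, ∑ t, P s a b t * φ D t ≤ 1) :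
    dsExp db P (fun D => ∏ i, if triple (D i) = (s, a, b) then φ D (D i).2.2.2 else 1) ≤ 1 := by
  let e := datasetEquiv 𝒮 𝒜 ℬ N
  have he : ∀ X S i, triple (e (X, S) i) = X i := fun _ _ _ => rfl
  have he' : ∀ X S i, (e (X, S) i).2.2.2 = S i := fun _ _ _ => rfl
  have hw : ∀ X S, dsWeight db P (e (X, S)) = (∏ i, db (X i).1 (X i).2.1 (X i).2.2)
      * ∏ i, P (X i).1 (X i).2.1 (X i).2.2 (S i) := fun X S => by
    rw [← Finset.prod_mul_distrib]
    rfl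
  unfold dsExp
  rw [← e.sum_comp, Fintype.sum_prod_type]
  simp only [he, he', hw, mul_assoc, ← Finset.mul_sum]
  calc _ ≤ ∑ X : Fin N → 𝒮 × 𝒜 × ℬ, (∏ i, db (X i).1 (X i).2.1 (X i).2.2) * 1 := by
        refine Finset.sum_le_sum fun X _ => mul_le_mul_of_nonneg_left ?_
          (Finset.prod_nonneg fun i _ => hdb.1 _ _ _)
        refine sum_prod_mul_prod_le_one (fun i => hP _ _ _) (fun i => X i = (s, a, b))
          (ψ := fun S => φ (e (X, S))) (fun S S' h => hφ _ _ ⟨fun _ => rfl, fun i hi => ?_⟩)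
          (fun S t => hφ0 _ t) (fun S i hi => ?_)
        · change ((X i).1, (X i).2.1, (X i).2.2, S i) = ((X i).1, (X i).2.1, (X i).2.2, S' i)
          rw [h i hi]
        · rw [hi]
          exact hφ1 _
    _ = 1 := by
        simp only [mul_one]
        rw [← Fintype.piFinset_univ, Finset.sum_prod_piFinset Finset.univ
          (fun (_ : Fin N) (x : 𝒮 × 𝒜 × ℬ) => db x.1 x.2.1 x.2.2)]
        simp [Fintype.sum_prod_type, hdb.2]

end Probability

end Dataset

section Main

variable [DecidableEq 𝒮] [DecidableEq 𝒜] [DecidableEq ℬ] {N : ℕ}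

/-- The exponent whose sum over the visits of a triple controls the empirical variance of `W`. -/
def devExponent (H : ℝ) (p W : 𝒮 → ℝ) (t : 𝒮) : ℝ :=
  (W t - Pexp p W) ^ 2 / (4 * H ^ 2) - 5 / 16 * varP p W / H ^ 2

lemma varP_Phat_le_of_sum_le {𝒜 ℬ : Type} [DecidableEq 𝒜] [DecidableEq ℬ] [Nonempty 𝒮]
    (D : Fin N → 𝒮 × 𝒜 × ℬ × 𝒮) {s : 𝒮} {a : 𝒜} {b : ℬ} {p W : 𝒮 → ℝ} {H c : ℝ} (hH : 0 < H)
    (hn : cnt D s a b ≠ 0)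
    (h : ∑ i, (if triple (D i) = (s, a, b) then devExponent H p W (D i).2.2.2 else 0) ≤ c) :
    varP (Phat D s a b) W ≤ 5 / 4 * varP p W + 4 * H ^ 2 * c / cnt D s a b := by
  have hn' : (0 : ℝ) < cnt D s a b := by positivity
  have hPh := Phat_mem_stdSimplex D s a b
  rw [← cnt_mul_Pexp_Phat D s a b hn] at h
  have e : Pexp (Phat D s a b) (devExponent H p W)
      = 1 / (4 * H ^ 2) * Pexp (Phat D s a b) (fun t => (W t - Pexp p W) ^ 2)
        - 5 / 16 * varP p W / H ^ 2 := by
    rw [← Pexp_const_mul]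
    conv_rhs => rw [← Pexp_const hPh (5 / 16 * varP p W / H ^ 2), ← Pexp_sub]
    congr 1
    funext t
    unfold devExponent
    ring
  rw [e, mul_comm, ← le_div_iff₀ hn', sub_le_iff_le_add, one_div_mul_eq_div,
    div_le_iff₀ (by positivity)] at h
  refine (varP_le_Pexp_sq_sub hPh (Pexp p W)).trans (h.trans (le_of_eq ?_))
  field_simp
  ring

lemma pow_Titer_le {γ : ℝ} (hγ : 0 < γ) (hγ1 : γ < 1) (hN : 0 < N) :
    γ ^ Titer γ N * (1 / (1 - γ)) ≤ 1 / N := by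
  have hγ0 : 0 < 1 - γ := by linarith
  have hN' : (0 : ℝ) < N := by exact_mod_cast hN
  have hlog : 0 < Real.log (1 / γ) := Real.log_pos ((one_lt_div hγ).2 hγ1)
  have h1 : Real.log (N / (1 - γ)) ≤ Titer γ N * Real.log (1 / γ) :=
    (div_le_iff₀ hlog).1 (Nat.le_ceil _)
  have h2 : N / (1 - γ) ≤ (1 / γ) ^ Titer γ N := by
    rw [← Real.log_le_log_iff (by positivity) (by positivity), Real.log_pow]
    exact h1
  rw [one_div_pow, div_le_div_iff₀ hγ0 (by positivity)] at h2
  rw [mul_one_div, div_le_div_iff₀ hγ0 hN']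
  linarith

/-- The value function of the iterates pinned at the value `u` on the triple `x`. -/
def looV (γ δ Cb : ℝ) (r : 𝒮 → 𝒜 → ℬ → ℝ) (x : 𝒮 × 𝒜 × ℬ) (u : ℝ)
    (D : Fin N → 𝒮 × 𝒜 × ℬ × 𝒮) : 𝒮 → ℝ :=
  valQ ((pinned (TpeMinus γ δ Cb N (cnt D) (Phat D) (rhat r D)) x u)^[Titer γ N] fun _ _ _ => 0)

lemma rhat_isReward {𝒮 𝒜 ℬ : Type} [DecidableEq 𝒮] [DecidableEq 𝒜] [DecidableEq ℬ]
    {r : 𝒮 → 𝒜 → ℬ → ℝ} (hr : IsReward r) (D : Fin N → 𝒮 × 𝒜 × ℬ × 𝒮) :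
    IsReward (rhat r D) := by
  intro s a b
  unfold rhat
  split_ifs
  exacts [⟨le_rfl, zero_le_one⟩, hr s a b]

section Approximation

variable [Nonempty 𝒮] [Nonempty 𝒜] [Nonempty ℬ] {γ δ Cb : ℝ} {r : 𝒮 → 𝒜 → ℬ → ℝ}

lemma isBoxContraction_empirical (hγ : 1 / 2 ≤ γ) (hγ1 : γ < 1) (hCb : 0 < Cb)
    (hL : 0 < Real.log ((N : ℝ) / ((1 - γ) * δ))) (hr : IsReward r)
    (D : Fin N → 𝒮 × 𝒜 × ℬ × 𝒮) :
    IsBoxContraction γ (1 / (1 - γ)) (TpeMinus γ δ Cb N (cnt D) (Phat D) (rhat r D)) :=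
  isBoxContraction_TpeMinus hγ hγ1 hCb hL _ (fun s a b => Phat_mem_stdSimplex D s a b)
    (rhat_isReward hr D)

lemma valQ_QpeMinus_mem_Icc (hγ : 1 / 2 ≤ γ) (hγ1 : γ < 1) (hCb : 0 < Cb)
    (hL : 0 < Real.log ((N : ℝ) / ((1 - γ) * δ))) (hr : IsReward r)
    (D : Fin N → 𝒮 × 𝒜 × ℬ × 𝒮) (s : 𝒮) :
    0 ≤ valQ (QpeMinus γ δ Cb r D) s ∧ valQ (QpeMinus γ δ Cb r D) s ≤ 1 / (1 - γ) :=
  valQ_mem_Icc ((isBoxContraction_empirical hγ hγ1 hCb hL hr D).iterate_mem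
    (InBox.zero (one_div_nonneg.2 (by linarith))) _) s

lemma looV_mem_Icc (hγ : 1 / 2 ≤ γ) (hγ1 : γ < 1) (hCb : 0 < Cb)
    (hL : 0 < Real.log ((N : ℝ) / ((1 - γ) * δ))) (hr : IsReward r)
    (D : Fin N → 𝒮 × 𝒜 × ℬ × 𝒮) (x : 𝒮 × 𝒜 × ℬ) {u : ℝ} (hu0 : 0 ≤ u)
    (huH : u ≤ 1 / (1 - γ)) (s : 𝒮) :
    0 ≤ looV γ δ Cb r x u D s ∧ looV γ δ Cb r x u D s ≤ 1 / (1 - γ) :=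
  valQ_mem_Icc (((isBoxContraction_empirical hγ hγ1 hCb hL hr D).pinned
    (by linarith) hu0 huH).iterate_mem (InBox.zero (one_div_nonneg.2 (by linarith))) _) s

lemma exists_looV_close (hγ : 1 / 2 ≤ γ) (hγ1 : γ < 1) (hCb : 0 < Cb)
    (hL : 0 < Real.log ((N : ℝ) / ((1 - γ) * δ))) (hr : IsReward r)
    (D : Fin N → 𝒮 × 𝒜 × ℬ × 𝒮) (hN : 0 < N) (x : 𝒮 × 𝒜 × ℬ) :
    ∃ j ∈ Finset.range (⌊1 / (1 - γ) * N⌋₊ + 1),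
      ∀ s, |valQ (QpeMinus γ δ Cb r D) s - looV γ δ Cb r x (j / N) D s| ≤ 3 / N := by
  have hT := isBoxContraction_empirical hγ hγ1 hCb hL hr D
  have hγ0 : 0 < 1 - γ := by linarith
  have hN' : (0 : ℝ) < N := by exact_mod_cast hN
  have h1 : ∀ s a b, TpeMinus γ δ Cb N (cnt D) (Phat D) (rhat r D) (fun _ _ _ => 0) s a b ≤ 1 := by
    intro s a b
    refine max_le ?_ zero_le_one
    have hv : valQ (fun (_ : 𝒮) (_ : 𝒜) (_ : ℬ) => (0 : ℝ)) = fun _ => 0 := funext valQ_zero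
    rw [hv, Pexp_const (Phat_mem_stdSimplex D s a b)]
    have h2 : 0 ≤ penalty γ δ Cb N (cnt D s a b) (Phat D s a b) (fun _ => 0) :=
      penalty_nonneg hγ1
    linarith [(rhat_isReward hr D s a b).2]
  obtain ⟨j, hj, h⟩ := hT.exists_grid_pinned (by linarith) hγ1 h1 hN
    (pow_Titer_le (by linarith) hγ1 hN) x
  have h0 : InBox (1 / (1 - γ)) (fun (_ : 𝒮) (_ : 𝒜) (_ : ℬ) => (0 : ℝ)) :=
    InBox.zero (by positivity)
  have hjH : (j : ℝ) / N ≤ 1 / (1 - γ) := by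
    rw [div_le_iff₀ hN']
    exact (Nat.le_floor_iff (by positivity)).1 (Nat.lt_succ_iff.1 (Finset.mem_range.1 hj))
  exact ⟨j, hj, abs_valQ_sub_le (hT.iterate_mem h0 _)
    ((hT.pinned (by linarith) (by positivity) hjH).iterate_mem h0 _) h⟩

end Approximation

/-- The inequality of the main theorem, given enough visits of `(s, a, b)` and a concentration
bound for each pinned value function on the grid. -/
lemma varP_Phat_QpeMinus_le [Nonempty 𝒮] [Nonempty 𝒜] [Nonempty ℬ] {γ δ Cb L d : ℝ}
    {r : 𝒮 → 𝒜 → ℬ → ℝ} (hγ : 1 / 2 ≤ γ) (hγ1 : γ < 1) (hCb : 0 < Cb)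
    (hLdef : L = Real.log ((N : ℝ) / ((1 - γ) * δ))) (hL : 1 / 2 ≤ L) (hr : IsReward r)
    (hN : 0 < N) (hd0 : 0 < d) (hd1 : d ≤ 1) {p : 𝒮 → ℝ} (hp : p ∈ stdSimplex ℝ 𝒮)
    (D : Fin N → 𝒮 × 𝒜 × ℬ × 𝒮) {s : 𝒮} {a : 𝒜} {b : ℬ} (hn : N * d / 4 ≤ cnt D s a b)
    (h : ∀ j ∈ Finset.range (⌊1 / (1 - γ) * N⌋₊ + 1),
      ∑ i, (if triple (D i) = (s, a, b) then
        devExponent (1 / (1 - γ)) p (looV γ δ Cb r (s, a, b) (j / N) D) (D i).2.2.2 else 0)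
          ≤ 2 * L) :
    varP (Phat D s a b) (valQ (QpeMinus γ δ Cb r D))
      ≤ 2 * varP p (valQ (QpeMinus γ δ Cb r D)) + 100 * L / ((1 - γ) ^ 2 * N * d) := by
  have hγ0 : 0 < 1 - γ := by linarith
  have hN' : (1 : ℝ) ≤ N := by exact_mod_cast hN
  have hPh := Phat_mem_stdSimplex D s a b
  have hn0 : (0 : ℝ) < cnt D s a b := lt_of_lt_of_le (by positivity) hn
  obtain ⟨j, hj, hclose⟩ := exists_looV_close hγ hγ1 hCb (by rw [← hLdef]; linarith) hr D hN
    (s, a, b)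
  set V := valQ (QpeMinus γ δ Cb r D)
  set W := looV γ δ Cb r (s, a, b) (j / N) D
  have h1 : varP (Phat D s a b) V ≤ 5 / 4 * varP (Phat D s a b) W + 5 * (3 / N) ^ 2 :=
    varP_le_of_abs_sub_le hPh hclose
  have h2 : varP (Phat D s a b) W
      ≤ 5 / 4 * varP p W + 4 * (1 / (1 - γ)) ^ 2 * (2 * L) / cnt D s a b :=
    varP_Phat_le_of_sum_le D (by positivity) (by exact_mod_cast hn0.ne') (h j hj)
  have h3 : varP p W ≤ 5 / 4 * varP p V + 5 * (3 / N) ^ 2 :=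
    varP_le_of_abs_sub_le hp fun t => by rw [abs_sub_comm]; exact hclose t
  have h4 := varP_nonneg (V := V) hp
  set X := L / ((1 - γ) ^ 2 * N * d) with hX
  have h5 : 4 * (1 / (1 - γ)) ^ 2 * (2 * L) / cnt D s a b ≤ 32 * X := by
    calc _ ≤ 4 * (1 / (1 - γ)) ^ 2 * (2 * L) / (N * d / 4) := by gcongr
      _ = 32 * X := by
        rw [hX]
        field_simp
        ring
  have h6 : (3 / N : ℝ) ^ 2 ≤ 9 / 2 * X := by
    have h7 : (1 / N : ℝ) ^ 2 ≤ 1 / (N * d) := by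
      rw [one_div_pow]
      apply one_div_le_one_div_of_le (by positivity)
      nlinarith
    have h8 : (2 : ℝ) ≤ L / (1 - γ) ^ 2 := by
      rw [le_div_iff₀ (by positivity)]
      nlinarith
    calc (3 / N : ℝ) ^ 2 = 9 * (1 / N) ^ 2 := by ring
      _ ≤ 9 * (1 / (N * d)) := by linarith
      _ ≤ 9 / 2 * (L / (1 - γ) ^ 2 * (1 / (N * d))) := by
        nlinarith [mul_le_mul_of_nonneg_right h8 (by positivity : 0 ≤ 1 / (N * d))]
      _ = 9 / 2 * X := by
        rw [hX]
        field_simp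
  have hX0 : 0 ≤ X := by positivity
  have h9 : 100 * L / ((1 - γ) ^ 2 * N * d) = 100 * X := by rw [hX]; ring
  rw [h9]
  linarith

section Failure

variable {γ δ Cb L : ℝ} {r : 𝒮 → 𝒜 → ℬ → ℝ} {db : 𝒮 → 𝒜 → ℬ → ℝ} {P : 𝒮 → 𝒜 → ℬ → 𝒮 → ℝ}

/-- A nonnegative statistic which is at least one whenever the triple `x` is visited too rarely, or
the concentration bound fails at `x` for some pinned value function on the grid. -/
def failureStat (γ δ Cb L : ℝ) (r : 𝒮 → 𝒜 → ℬ → ℝ) (db : 𝒮 → 𝒜 → ℬ → ℝ)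
    (P : 𝒮 → 𝒜 → ℬ → 𝒮 → ℝ) (x : 𝒮 × 𝒜 × ℬ) (D : Fin N → 𝒮 × 𝒜 × ℬ × 𝒮) : ℝ :=
  Real.exp (N * db x.1 x.2.1 x.2.2 / 4) * Real.exp (-(cnt D x.1 x.2.1 x.2.2 : ℝ))
    + ∑ j ∈ Finset.range (⌊1 / (1 - γ) * N⌋₊ + 1), Real.exp (-(2 * L)) *
      ∏ i, if triple (D i) = (x.1, x.2.1, x.2.2) then
        Real.exp (devExponent (1 / (1 - γ)) (P x.1 x.2.1 x.2.2) (looV γ δ Cb r x (j / N) D)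
          (D i).2.2.2) else 1

lemma failureStat_nonneg (x : 𝒮 × 𝒜 × ℬ) (D : Fin N → 𝒮 × 𝒜 × ℬ × 𝒮) :
    0 ≤ failureStat γ δ Cb L r db P x D := by
  refine add_nonneg (by positivity) (Finset.sum_nonneg fun j _ => mul_nonneg (by positivity) ?_)
  exact Finset.prod_nonneg fun i _ => by split_ifs <;> positivity

lemma dsExp_failureStat_le [Nonempty 𝒮] [Nonempty 𝒜] [Nonempty ℬ] (hγ : 1 / 2 ≤ γ) (hγ1 : γ < 1)
    (hCb : 0 < Cb) (hLdef : L = Real.log ((N : ℝ) / ((1 - γ) * δ))) (hL : 0 < L)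
    (hr : IsReward r) (hP : IsKernel P) (hdb : IsDist3 db) (hN : 0 < N) {x : 𝒮 × 𝒜 × ℬ}
    (hx : 8 * L ≤ N * db x.1 x.2.1 x.2.2) :
    dsExp db P (failureStat (N := N) γ δ Cb L r db P x)
      ≤ 3 * (1 / (1 - γ) * N) * Real.exp (-(2 * L)) := by
  obtain ⟨s, a, b⟩ := x
  have hγ0 : 0 < 1 - γ := by linarith
  have hN' : (1 : ℝ) ≤ N := by exact_mod_cast hN
  have hH1 : 1 ≤ 1 / (1 - γ) := by
    rw [le_div_iff₀ hγ0]
    linarith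
  have hHN : 1 ≤ 1 / (1 - γ) * N := one_le_mul_of_one_le_of_one_le hH1 hN'
  have hcount : Real.exp (N * db s a b / 4) *
      dsExp db P (fun D : Fin N → 𝒮 × 𝒜 × ℬ × 𝒮 => Real.exp (-(cnt D s a b : ℝ)))
        ≤ Real.exp (-(2 * L)) := by
    refine (mul_le_mul_of_nonneg_left (dsExp_exp_neg_cnt_le hP hdb s a b)
      (Real.exp_pos _).le).trans ?_
    rw [← Real.exp_add]
    apply Real.exp_le_exp.2
    dsimp only at hx
    linarith
  have hprod : ∀ j ∈ Finset.range (⌊1 / (1 - γ) * N⌋₊ + 1),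
      dsExp db P (fun D : Fin N → 𝒮 × 𝒜 × ℬ × 𝒮 => Real.exp (-(2 * L)) *
        ∏ i, if triple (D i) = (s, a, b) then
          Real.exp (devExponent (1 / (1 - γ)) (P s a b) (looV γ δ Cb r (s, a, b) (j / N) D)
            (D i).2.2.2) else 1) ≤ Real.exp (-(2 * L)) := by
    intro j hj
    have hjH : (j : ℝ) / N ≤ 1 / (1 - γ) := by
      rw [div_le_iff₀ (by positivity)]
      exact (Nat.le_floor_iff (by positivity)).1 (Nat.lt_succ_iff.1 (Finset.mem_range.1 hj))
    rw [dsExp_const_mul]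
    refine mul_le_of_le_one_right (Real.exp_pos _).le (dsExp_prod_le_one hP hdb
      (φ := fun D t => Real.exp (devExponent (1 / (1 - γ)) (P s a b)
        (looV γ δ Cb r (s, a, b) (j / N) D) t)) ?_ (fun _ _ => (Real.exp_pos _).le) fun D => ?_)
    · intro D D' h
      simp only [looV, pinned_TpeMinus_congr γ δ Cb r h]
    · have h := looV_mem_Icc hγ hγ1 hCb (hLdef ▸ hL) hr D (s, a, b) (by positivity) hjH
      exact sum_mul_exp_sq_dev_le_one (hP s a b) (by positivity) (fun t => (h t).1)
        fun t => (h t).2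
  have hcard : ((⌊1 / (1 - γ) * N⌋₊ + 1 : ℕ) : ℝ) ≤ 2 * (1 / (1 - γ) * N) := by
    push_cast
    linarith [Nat.floor_le (by positivity : (0 : ℝ) ≤ 1 / (1 - γ) * N)]
  unfold failureStat
  rw [dsExp_add, dsExp_const_mul, dsExp_sum]
  refine (add_le_add hcount (Finset.sum_le_card_nsmul _ _ _ hprod)).trans ?_
  rw [Finset.card_range, nsmul_eq_mul]
  nlinarith [Real.exp_pos (-(2 * L))]

lemma one_le_failureStat [Nonempty 𝒮] [Nonempty 𝒜] [Nonempty ℬ] (hγ : 1 / 2 ≤ γ) (hγ1 : γ < 1)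
    (hCb : 0 < Cb) (hLdef : L = Real.log ((N : ℝ) / ((1 - γ) * δ))) (hL : 1 / 2 ≤ L)
    (hr : IsReward r) (hP : IsKernel P) (hdb : IsDist3 db) (hN : 0 < N)
    (D : Fin N → 𝒮 × 𝒜 × ℬ × 𝒮) {s : 𝒮} {a : 𝒜} {b : ℬ} (hd : 0 < db s a b)
    (h : ¬ varP (Phat D s a b) (valQ (QpeMinus γ δ Cb r D))
      ≤ 2 * varP (P s a b) (valQ (QpeMinus γ δ Cb r D))
        + 100 * L / ((1 - γ) ^ 2 * N * db s a b)) :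
    1 ≤ failureStat γ δ Cb L r db P (s, a, b) D := by
  have hprod : ∀ j : ℕ, 0 ≤ Real.exp (-(2 * L)) * ∏ i, if triple (D i) = (s, a, b) then
      Real.exp (devExponent (1 / (1 - γ)) (P s a b) (looV γ δ Cb r (s, a, b) (j / N) D)
        (D i).2.2.2) else 1 := fun j =>
    mul_nonneg (Real.exp_pos _).le (Finset.prod_nonneg fun i _ => by split_ifs <;> positivity)
  have hd1 : db s a b ≤ 1 := by
    simpa using hdb.sum_le_one {(s, a, b)}
  by_cases hn : N * db s a b / 4 ≤ cnt D s a b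
  · by_contra hlt
    refine h (varP_Phat_QpeMinus_le hγ hγ1 hCb hLdef hL hr hN hd hd1 (hP s a b) D hn
      fun j hj => ?_)
    by_contra hj2
    refine hlt (le_add_of_nonneg_of_le (by positivity)
      (le_trans ?_ (Finset.single_le_sum (fun j _ => hprod j) hj)))
    have e : ∀ i, (if triple (D i) = (s, a, b) then Real.exp (devExponent (1 / (1 - γ)) (P s a b)
        (looV γ δ Cb r (s, a, b) (j / N) D) (D i).2.2.2) else 1)
        = Real.exp (if triple (D i) = (s, a, b) then devExponent (1 / (1 - γ)) (P s a b)
        (looV γ δ Cb r (s, a, b) (j / N) D) (D i).2.2.2 else 0) := fun i => by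
      split_ifs <;> simp
    rw [Finset.prod_congr rfl fun i _ => e i, ← Real.exp_sum, ← Real.exp_add]
    exact Real.one_le_exp (by linarith)
  · refine le_add_of_le_of_nonneg ?_ (Finset.sum_nonneg fun j _ => hprod j)
    dsimp only
    rw [← Real.exp_add]
    exact Real.one_le_exp (by linarith)

lemma one_sub_le_dsProb_varP_Phat_le [Nonempty 𝒮] [Nonempty 𝒜] [Nonempty ℬ] (hγ : 1 / 2 ≤ γ)
    (hγ1 : γ < 1) (hδ0 : 0 < δ) (hδ1 : δ < 1) (hCb : 0 < Cb) (hr : IsReward r) (hP : IsKernel P)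
    (hdb : IsDist3 db) (hN : 0 < N) :
    1 - δ ≤ dsProb db P {D : Fin N → 𝒮 × 𝒜 × ℬ × 𝒮 |
      ∀ s a b, 0 < db s a b → varP (Phat D s a b) (valQ (QpeMinus γ δ Cb r D))
        ≤ 2 * varP (P s a b) (valQ (QpeMinus γ δ Cb r D))
          + 100 * Real.log ((N : ℝ) / ((1 - γ) * δ)) / ((1 - γ) ^ 2 * N * db s a b)} := by
  have hγ0 : 0 < 1 - γ := by linarith
  have hN' : (1 : ℝ) ≤ N := by exact_mod_cast hN
  set L := Real.log ((N : ℝ) / ((1 - γ) * δ)) with hLdef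
  have hexp : Real.exp (-L) = (1 - γ) * δ / N := by
    rw [hLdef, Real.exp_neg, Real.exp_log (by positivity), inv_div]
  have hL : 1 / 2 ≤ L := by
    have h2 : Real.log 2 ≤ L := by
      apply Real.log_le_log two_pos
      rw [le_div_iff₀ (by positivity)]
      nlinarith
    linarith [Real.log_two_gt_d9]
  let K : Finset (𝒮 × 𝒜 × ℬ) := Finset.univ.filter fun x => 8 * L ≤ N * db x.1 x.2.1 x.2.2
  have hK : (K.card : ℝ) * 4 ≤ N := by
    have h1 : K.card • (8 * L) ≤ ∑ x ∈ K, N * db x.1 x.2.1 x.2.2 :=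
      Finset.card_nsmul_le_sum _ _ _ fun x hx => (Finset.mem_filter.1 hx).2
    rw [nsmul_eq_mul, ← Finset.mul_sum] at h1
    nlinarith [hdb.sum_le_one K, (Nat.cast_nonneg K.card : (0 : ℝ) ≤ K.card)]
  refine one_sub_le_dsProb hP hdb (g := fun D => ∑ x ∈ K, failureStat γ δ Cb L r db P x D)
    (fun D => Finset.sum_nonneg fun x _ => failureStat_nonneg x D) (fun D hD => ?_) ?_
  · simp only [Set.mem_ofPred_eq, not_forall] at hD
    obtain ⟨s, a, b, hd, h⟩ := hD
    refine (one_le_failureStat hγ hγ1 hCb hLdef hL hr hP hdb hN D hd h).trans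
      (Finset.single_le_sum (f := fun x => failureStat γ δ Cb L r db P x D)
        (fun x _ => failureStat_nonneg x D) (Finset.mem_filter.2 ⟨Finset.mem_univ _, ?_⟩))
    by_contra! hlt
    dsimp only at hlt
    have hV := valQ_QpeMinus_mem_Icc (δ := δ) hγ hγ1 hCb (by linarith) hr D
    have h1 := varP_le_sq (Phat_mem_stdSimplex D s a b) (fun t => (hV t).1) fun t => (hV t).2
    have h2 := varP_nonneg (V := valQ (QpeMinus γ δ Cb r D)) (hP s a b)
    have h3 : (1 / (1 - γ)) ^ 2 ≤ 100 * L / ((1 - γ) ^ 2 * N * db s a b) := by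
      rw [one_div_pow, div_le_div_iff₀ (by positivity) (by positivity)]
      nlinarith [pow_pos hγ0 2]
    linarith
  · rw [dsExp_sum]
    refine (Finset.sum_le_card_nsmul _ _ _ fun x hx => dsExp_failureStat_le hγ hγ1 hCb hLdef
      (by linarith) hr hP hdb hN (Finset.mem_filter.1 hx).2).trans ?_
    have e : 3 * (1 / (1 - γ) * N) * Real.exp (-(2 * L)) = 3 * δ * ((1 - γ) * δ / N) := by
      rw [show -(2 * L) = -L + -L by ring, Real.exp_add, hexp]
      field_simp
    rw [nsmul_eq_mul, e]
    calc (K.card : ℝ) * (3 * δ * ((1 - γ) * δ / N))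
        ≤ N / 4 * (3 * δ * ((1 - γ) * δ / N)) := by gcongr; linarith
      _ = 3 / 4 * δ * ((1 - γ) * δ) := by field_simp
      _ ≤ 3 / 4 * δ * 1 := by gcongr; nlinarith
      _ ≤ δ := by linarith

lemma valQ_QpeMinus_of_isEmpty [Nonempty 𝒜] [Nonempty ℬ] (D : Fin 0 → 𝒮 × 𝒜 × ℬ × 𝒮) :
    valQ (QpeMinus γ δ Cb r D) = fun _ => 0 := by
  have h : Titer γ 0 = 0 := by simp [Titer]
  funext s
  rw [QpeMinus, h]
  exact valQ_zero s

end Failure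

end Main

end ZSMG

open ZSMG in
/-- Claim 2: with probability `1−δ`, the empirical variance of
`V_pe^−` is controlled by the true variance plus a lower-order term, for all
`(s,a,b)` with `d_b(s,a,b) > 0`. -/
theorem statement15 :
    ∃ Cb : ℝ, 0 < Cb ∧ ∃ c₄ : ℝ, 0 < c₄ ∧
      ∀ (𝒮 𝒜 ℬ : Type) [Fintype 𝒮] [Fintype 𝒜] [Fintype ℬ]
        [DecidableEq 𝒮] [DecidableEq 𝒜] [DecidableEq ℬ]
        [Nonempty 𝒮] [Nonempty 𝒜] [Nonempty ℬ],
      ∀ γ δ : ℝ, 1 / 2 ≤ γ → γ < 1 → δ ∈ Set.Ioo (0 : ℝ) 1 →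
      ∀ P : 𝒮 → 𝒜 → ℬ → 𝒮 → ℝ, IsKernel P →
      ∀ r : 𝒮 → 𝒜 → ℬ → ℝ, IsReward r →
      ∀ db : 𝒮 → 𝒜 → ℬ → ℝ, IsDist3 db →
      ∀ N : ℕ,
        1 - δ ≤ dsProb db P {D : Fin N → 𝒮 × 𝒜 × ℬ × 𝒮 |
          ∀ (s : 𝒮) (a : 𝒜) (b : ℬ), 0 < db s a b →
            varP (Phat D s a b) (valQ (QpeMinus γ δ Cb r D)) ≤
              2 * varP (P s a b) (valQ (QpeMinus γ δ Cb r D)) +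
                c₄ * Real.log ((N : ℝ) / ((1 - γ) * δ)) /
                  ((1 - γ) ^ 2 * (N : ℝ) * db s a b)} := by
  refine ⟨1, one_pos, 100, by norm_num, ?_⟩
  intro 𝒮 𝒜 ℬ _ _ _ _ _ _ _ _ _ γ δ hγ hγ1 hδ P hP r hr db hdb N
  rcases Nat.eq_zero_or_pos N with rfl | hN
  · refine one_sub_le_dsProb hP hdb (g := fun _ => 0) (fun _ => le_rfl) (fun D hD => ?_)
      (by simpa [dsExp] using hδ.1.le)
    refine absurd (fun s a b _ => ?_) hD
    rw [valQ_QpeMinus_of_isEmpty]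
    simp [varP, Pexp]
  · exact one_sub_le_dsProb_varP_Phat_le hγ hγ1 hδ.1 hδ.2 one_pos hr hP hdb hN
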